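/- Let 0<c₁<⋯<c_m be non-integer reals. There exist constants C>0 and κ>0 depending only on c₁,…,c_m, m such that the following holds for every integer N≥1 and every l∈ℕ: if f∈ℓ²(ℤ^m) and the Fourier transform f̂ : 𝕋^m → ℂ vanishes on the box ∏_{i=1}^{m} [−2^l N^{−c_i}, 2^l N^{−c_i}] (viewed as a subset of 𝕋^m = (ℝ/ℤ)^m via representatives in [−1/2,1/2)), then ‖Ã_N f‖_{ℓ²(ℤ^m)} ≤ C (N^{−κ} + 2^{−κ l}) ‖f‖_{ℓ²(ℤ^m)}, where Ã_N f(x) = (1/N) ∑_{n=1}^{N} 1_{n>N/2} f(x−(⌊n^{c₁}⌋,…,⌊n^{c_m}⌋)). -/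

import Mathlib

/-!
Taking Fourier transforms turns `Ã_N` into multiplication by
`m_N(ξ) = N⁻¹ ∑_{N/2 < n ≤ N} e(-∑ ξ_i ⌊n ^ c_i⌋)`. The vanishing hypothesis at `ξ = 0` is an
unconditionally convergent series, so `f` is absolutely summable and its transform is a continuous
function. By Plancherel it is enough to bound `m_N(ξ)` by `C X^{-κ}`, where `X = min(N, 2^l)`, for
`ξ ∈ [-1/2, 1/2]^m` outside the box.

Without integer parts, the sums `∑ e(∑ λ_i n ^ c_i)` save a power of `min(N, Λ)`, where
`Λ = max |λ_i| N ^ c_i` and `|λ_i| ≤ N`. Indeed, as the `c_i` are distinct and not integers, a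
Vandermonde determinant shows that at every point one of any `m` consecutive derivatives of the
phase has the expected size `Λ / N ^ k`. On blocks whose length is a small multiple of `N` this
persists, and the `k`-th derivative test applies: it is obtained from the Kusmin–Landau inequality
by repeated van der Corput differencing. The orders `k` are taken so large that these derivatives
are `O(1 / N)`.

To remove the integer parts one writes `e(-ξ ⌊x⌋) = e(-ξ x) e(ξ {x})` and approximates `e(ξ {x})` by
a trigonometric polynomial of degree below `K = Q³`, the convolution with a Fejér kernel discretised
to the points `r / K`. The error is `O(1 / Q)` plus a multiple of `F_Q(x) / Q`, and the averages of
the Fejér kernel `F_Q` are again exponential sums. With `γ = min(1, c_1)`, every frequency `j - ξ`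
that appears, `j` an integer vector, has `Λ ≥ X^γ / 2`: for `j = 0` since `ξ` is outside the box,
for `j_i ≠ 0` since `|j_i - ξ_i| ≥ 1/2`. Choosing `Q` as a small power of `X` concludes.
-/

open MeasureTheory Filter Finset
open scoped ENNReal NNReal

noncomputable section

/-- `e(x) = e^{2πix}`. -/
def eC (x : ℝ) : ℂ := Complex.exp (2 * Real.pi * Complex.I * x)

/-- The upper-half discrete averages
`Ã_N f (x) = (1/N) ∑_{n=1}^{N} 1_{n > N/2} f(x − (⌊n^{c₁}⌋, …, ⌊n^{c_m}⌋))`. -/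
def Atil (m : ℕ) (c : Fin m → ℝ) (N : ℕ) (f : (Fin m → ℤ) → ℂ)
    (x : Fin m → ℤ) : ℂ :=
  (N : ℂ)⁻¹ * ∑ n ∈ Finset.Icc 1 N,
    if N < 2 * n then f (x - fun i => ⌊(n : ℝ) ^ c i⌋) else 0

/-- The `ℓ^p(ℤ^m)` norm of a complex-valued function. -/
def lpZ (m : ℕ) (p : ℝ) (f : (Fin m → ℤ) → ℂ) : ℝ≥0∞ :=
  (∑' x : Fin m → ℤ, (‖f x‖₊ : ℝ≥0∞) ^ p) ^ p⁻¹

/-- The `ℓ^p(ℤ^m)` norm of an `ℝ≥0∞`-valued function. -/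
def lpZE (m : ℕ) (p : ℝ) (g : (Fin m → ℤ) → ℝ≥0∞) : ℝ≥0∞ :=
  (∑' x : Fin m → ℤ, g x ^ p) ^ p⁻¹

/-! ### The character `e` -/

lemma eC_eq (x : ℝ) : eC x = Complex.exp (((2 * Real.pi * x : ℝ) : ℂ) * Complex.I) := by
  unfold eC; congr 1; push_cast; ring

lemma eC_add (x y : ℝ) : eC (x + y) = eC x * eC y := by
  unfold eC; rw [← Complex.exp_add]; congr 1; push_cast; ring

lemma eC_zero : eC 0 = 1 := by simp [eC]

lemma norm_eC (x : ℝ) : ‖eC x‖ = 1 := by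
  rw [eC_eq]; exact Complex.norm_exp_ofReal_mul_I _

lemma conj_eC (x : ℝ) : (starRingEnd ℂ) (eC x) = eC (-x) := by
  rw [eC_eq, eC_eq, ← Complex.exp_conj]
  simp only [map_mul, Complex.conj_ofReal, Complex.conj_I]
  push_cast; ring_nf

lemma eC_mul_conj (x y : ℝ) : eC x * (starRingEnd ℂ) (eC y) = eC (x - y) := by
  rw [conj_eC, ← eC_add, sub_eq_add_neg]

lemma eC_intCast (k : ℤ) : eC k = 1 := by
  rw [eC, Complex.exp_eq_one_iff]
  exact ⟨k, by push_cast; ring⟩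

lemma eC_add_intCast (x : ℝ) (k : ℤ) : eC (x + k) = eC x := by
  rw [eC_add, eC_intCast, mul_one]

lemma eC_natCast_mul (n : ℕ) (x : ℝ) : eC (n * x) = eC x ^ n := by
  unfold eC; rw [← Complex.exp_nat_mul]; congr 1; push_cast; ring

lemma eC_sum {ι : Type*} (s : Finset ι) (g : ι → ℝ) :
    eC (∑ i ∈ s, g i) = ∏ i ∈ s, eC (g i) := by
  simp only [eC, ← Complex.exp_sum, ← mul_sum, Complex.ofReal_sum]

lemma norm_sum_eC_le {ι : Type*} (s : Finset ι) (a : ι → ℝ) : ‖∑ n ∈ s, eC (a n)‖ ≤ #s := by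
  simpa only [norm_eC, sum_const, nsmul_one] using norm_sum_le s fun n => eC (a n)

lemma norm_eC_sub_one (x : ℝ) : ‖eC x - 1‖ = 2 * |Real.sin (Real.pi * x)| := by
  have h := Complex.norm_exp_I_mul_ofReal_sub_one (2 * Real.pi * x)
  rw [eC_eq, mul_comm _ Complex.I, h, Real.norm_eq_abs, abs_mul, abs_two]
  congr 3; ring

lemma norm_eC_sub_eC_le (x y : ℝ) : ‖eC x - eC y‖ ≤ 2 * Real.pi * |x - y| := by
  have h : eC x - eC y = (eC (x - y) - 1) * eC y := by
    rw [sub_mul, ← eC_add, one_mul, sub_add_cancel]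
  have hsin := Real.abs_sin_le_abs (x := Real.pi * (x - y))
  rw [abs_mul, abs_of_pos Real.pi_pos] at hsin
  rw [h, norm_mul, norm_eC, mul_one, norm_eC_sub_one]
  linarith

lemma four_mul_abs_le_norm_eC_sub_one {x : ℝ} (hx : |x| ≤ 1 / 2) : 4 * |x| ≤ ‖eC x - 1‖ := by
  have hpi := Real.pi_pos
  have h := Real.mul_abs_le_abs_sin (x := Real.pi * x)
    (by rw [abs_mul, abs_of_pos hpi]; nlinarith)
  rw [abs_mul, abs_of_pos hpi, ← mul_assoc, div_mul_cancel₀ _ hpi.ne'] at h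
  rw [norm_eC_sub_one]
  linarith

lemma four_mul_abs_sub_round_le (x : ℝ) : 4 * |x - round x| ≤ ‖eC x - 1‖ := by
  rw [← eC_add_intCast (x) (-round x), Int.cast_neg, ← sub_eq_add_neg]
  exact four_mul_abs_le_norm_eC_sub_one (abs_sub_round x)

lemma eC_eq_one_iff {x : ℝ} : eC x = 1 ↔ ∃ k : ℤ, x = k := by
  refine ⟨fun h => ⟨round x, ?_⟩, fun ⟨k, hk⟩ => hk ▸ eC_intCast k⟩
  have h0 := four_mul_abs_sub_round_le x
  rw [h, sub_self, norm_zero] at h0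
  exact sub_eq_zero.1 (abs_eq_zero.1 (by linarith [abs_nonneg (x - round x)]))

/-! ### The inequalities of Kusmin–Landau and van der Corput -/

lemma norm_inv_sub_inv_le {𝕜 : Type*} [NormedDivisionRing 𝕜] {u v : 𝕜} {r s : ℝ} (hr : 0 < r)
    (hu : r ≤ ‖u‖) (hv : r ≤ ‖v‖) (huv : ‖u - v‖ ≤ s) : ‖v⁻¹ - u⁻¹‖ ≤ s / r ^ 2 := by
  have hu0 := hr.trans_le hu
  have hv0 := hr.trans_le hv
  rw [inv_sub_inv' (norm_pos_iff.1 hv0) (norm_pos_iff.1 hu0), norm_mul, norm_mul, norm_inv,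
    norm_inv, ← div_eq_inv_mul, ← div_eq_mul_inv, div_div, sq]
  exact div_le_div₀ ((norm_nonneg _).trans huv) huv (by positivity) (by gcongr)

lemma norm_sum_smul_le_of_partial_sums {𝕜 E : Type*} [NormedRing 𝕜] [SeminormedAddCommGroup E]
    [Module 𝕜 E] [IsBoundedSMul 𝕜 E] {w : ℕ → 𝕜} {g : ℕ → E} {M : ℕ} {W V G : ℝ}
    (hW : 0 ≤ W) (hV : 0 ≤ V)
    (hw : ∀ n < M, ‖w n‖ ≤ W) (hvar : ∀ n, n + 1 < M → ‖w (n + 1) - w n‖ ≤ V)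
    (hg : ∀ n ≤ M, ‖∑ i ∈ range n, g i‖ ≤ G) :
    ‖∑ n ∈ range M, w n • g n‖ ≤ W * G + M * (V * G) := by
  have hG : 0 ≤ G := (norm_nonneg _).trans (hg 0 M.zero_le)
  rcases M.eq_zero_or_pos with rfl | hM
  · simpa using mul_nonneg hW hG
  have hlast : ‖w (M - 1) • ∑ i ∈ range M, g i‖ ≤ W * G :=
    (norm_smul_le _ _).trans (mul_le_mul (hw _ (by omega)) (hg _ le_rfl) (norm_nonneg _) hW)
  have hrest : ∀ n ∈ range (M - 1),
      ‖(w (n + 1) - w n) • ∑ i ∈ range (n + 1), g i‖ ≤ V * G := fun n hn => by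
    have hn : n + 1 < M := by have := mem_range.1 hn; omega
    exact (norm_smul_le _ _).trans (mul_le_mul (hvar n hn) (hg _ hn.le) (norm_nonneg _) hV)
  rw [sum_range_by_parts]
  refine (norm_sub_le _ _).trans (add_le_add hlast ((norm_sum_le_of_le _ hrest).trans ?_))
  rw [sum_const, card_range, nsmul_eq_mul]
  gcongr
  exact M.sub_le 1

/-- Kusmin–Landau: `e(a n) = (e(a (n + 1)) - e(a n)) w n` with a slowly varying weight `w`. -/
theorem norm_sum_eC_le_of_slow {a : ℕ → ℝ} {M : ℕ} {ρ σ : ℝ} (hρ : 0 < ρ) (hσ : 0 ≤ σ)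
    (hstep : ∀ n < M, |a (n + 1) - a n| ∈ Set.Icc ρ (1 / 2))
    (hslow : ∀ n, n + 1 < M → |(a (n + 2) - a (n + 1)) - (a (n + 1) - a n)| ≤ σ) :
    ‖∑ n ∈ range M, eC (a n)‖ ≤ 1 / ρ + M * (σ / ρ ^ 2) := by
  set u : ℕ → ℂ := fun n => eC (a (n + 1) - a n) - 1 with hu_def
  have hu : ∀ n < M, 4 * ρ ≤ ‖u n‖ := fun n hn =>
    (mul_le_mul_of_nonneg_left (hstep n hn).1 zero_le_four).trans
      (four_mul_abs_le_norm_eC_sub_one (hstep n hn).2)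
  have hsum : ∑ n ∈ range M, eC (a n) =
      ∑ n ∈ range M, (u n)⁻¹ • (eC (a (n + 1)) - eC (a n)) := sum_congr rfl fun n hn => by
    have hn : u n ≠ 0 := norm_pos_iff.1 (by linarith [hu n (mem_range.1 hn)])
    have h : eC (a (n + 1)) - eC (a n) = u n * eC (a n) := by
      simp only [hu_def, sub_mul, ← eC_add, sub_add_cancel, one_mul]
    rw [h, smul_eq_mul, inv_mul_cancel_left₀ hn]
  have hvar : ∀ n, n + 1 < M → ‖(u (n + 1))⁻¹ - (u n)⁻¹‖ ≤ 8 * σ / (4 * ρ) ^ 2 := fun n hn => by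
    refine norm_inv_sub_inv_le (by positivity) (hu n (by omega)) (hu (n + 1) hn) ?_
    rw [sub_sub_sub_cancel_right]
    refine (norm_eC_sub_eC_le _ _).trans ?_
    rw [abs_sub_comm]
    exact mul_le_mul (by linarith [Real.pi_le_four]) (hslow n hn) (abs_nonneg _) (by norm_num)
  have htele : ∀ n ≤ M, ‖∑ i ∈ range n, (eC (a (i + 1)) - eC (a i))‖ ≤ 2 := fun n _ => by
    rw [sum_range_sub (fun i => eC (a i))]
    exact (norm_sub_le _ _).trans (by rw [norm_eC, norm_eC]; norm_num)
  have hw : ∀ n < M, ‖(u n)⁻¹‖ ≤ (4 * ρ)⁻¹ := fun n hn => by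
    rw [norm_inv]; exact inv_anti₀ (by positivity) (hu n hn)
  rw [hsum]
  refine (norm_sum_smul_le_of_partial_sums (by positivity) (by positivity) hw hvar htele).trans
    (add_le_add ?_ (le_of_eq ?_))
  · rw [mul_inv, one_div]; linarith [inv_pos.2 hρ]
  · field_simp; ring

lemma sum_natAbs_sub_le {r : ℕ → ℝ} (hr : ∀ d, 0 ≤ r d) {h H : ℕ} (hh : h < H) :
    ∑ k ∈ range H, r (h - k : ℤ).natAbs ≤ 2 * ∑ d ∈ range H, r d := by
  have hinj : ∀ s ⊆ range H, Set.InjOn (fun k : ℕ => (h - k : ℤ).natAbs) s →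
      ∑ k ∈ s, r (h - k : ℤ).natAbs ≤ ∑ d ∈ range H, r d := fun s hs hinj => by
    rw [← sum_image (f := r) hinj]
    refine sum_le_sum_of_subset_of_nonneg (image_subset_iff.2 fun k hk => ?_) fun d _ _ => hr d
    have := mem_range.1 (hs hk)
    exact mem_range.2 (by omega)
  rw [← sum_filter_add_sum_filter_not _ (· ≤ h), two_mul]
  refine add_le_add (hinj _ (filter_subset _ _) ?_) (hinj _ (filter_subset _ _) ?_) <;>
  · intro k hk l hl hkl
    simp only [coe_filter, mem_range, Set.mem_ofPred_eq] at hk hl hkl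
    omega

/-- The correlation `∑ n, z (n + d) * conj (z n)` of a finitely supported sequence. -/
def autocorrelation (z : ℤ → ℂ) (d : ℤ) : ℂ := ∑' n, z (n + d) * (starRingEnd ℂ) (z n)

lemma tsum_shift_mul_conj_shift (z : ℤ → ℂ) (h k : ℤ) :
    ∑' n, z (n + h) * (starRingEnd ℂ) (z (n + k)) = autocorrelation z (h - k) := by
  rw [autocorrelation, ← (Equiv.addRight k).tsum_eq fun n => z (n + (h - k)) * _]
  simp only [Equiv.coe_addRight, add_assoc, add_sub_cancel]

lemma norm_autocorrelation_neg (z : ℤ → ℂ) (d : ℤ) :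
    ‖autocorrelation z (-d)‖ = ‖autocorrelation z d‖ := by
  have h := tsum_shift_mul_conj_shift z 0 d
  rw [zero_sub] at h
  rw [← h, autocorrelation, ← RCLike.norm_conj, RCLike.conj_tsum]
  simp only [map_mul, RCLike.conj_conj, add_zero, mul_comm]

section VanDerCorput

variable {z : ℤ → ℂ} {L : ℕ}

lemma window_eq_zero (hz : ∀ n ∉ Ico (0 : ℤ) L, z n = 0) {h H : ℕ} (hh : h < H) {n : ℤ}
    (hn : n ∉ Ico (-H : ℤ) L) : z (n + h) = 0 := by
  refine hz _ fun hmem => hn ?_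
  rw [mem_Ico] at hmem ⊢
  omega

lemma sum_norm_sq_window_le (hz : ∀ n ∉ Ico (0 : ℤ) L, z n = 0) (H : ℕ) :
    ∑ n ∈ Ico (-H : ℤ) L, ‖∑ h ∈ range H, z (n + h)‖ ^ 2 ≤
      H * (2 * ∑ d ∈ range H, ‖autocorrelation z d‖) := by
  have hexpand : ((∑ n ∈ Ico (-H : ℤ) L, ‖∑ h ∈ range H, z (n + h)‖ ^ 2 : ℝ) : ℂ) =
      ∑ h ∈ range H, ∑ k ∈ range H, autocorrelation z (h - k) := by
    push_cast
    simp only [← Complex.mul_conj', map_sum, sum_mul_sum]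
    rw [sum_comm]
    refine sum_congr rfl fun h hh => ?_
    rw [sum_comm]
    refine sum_congr rfl fun k _ => ?_
    rw [← tsum_shift_mul_conj_shift, tsum_eq_sum fun n hn => by
      rw [window_eq_zero hz (mem_range.1 hh) hn, zero_mul]]
  have habs : ∀ h k : ℕ, ‖autocorrelation z (h - k)‖ =
      ‖autocorrelation z ((h - k : ℤ).natAbs : ℕ)‖ := fun h k => by
    rcases Int.natAbs_eq (h - k : ℤ) with e | e
    · rw [← e]
    · rw [← norm_autocorrelation_neg, ← neg_eq_iff_eq_neg.2 e]
  rw [← Complex.norm_of_nonneg (r := ∑ n ∈ _, _) (by positivity), hexpand]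
  refine (norm_sum_le_of_le _ fun h hh => (norm_sum_le _ _).trans ?_).trans
    (by rw [sum_const, card_range, nsmul_eq_mul])
  simp only [habs]
  exact sum_natAbs_sub_le (r := fun d => ‖autocorrelation z d‖) (fun _ => norm_nonneg _)
    (mem_range.1 hh)

theorem van_der_corput (hz : ∀ n ∉ Ico (0 : ℤ) L, z n = 0) {H : ℕ} (hH : 0 < H) :
    H * ‖∑' n, z n‖ ^ 2 ≤ 2 * (L + H) * ∑ d ∈ range H, ‖autocorrelation z d‖ := by
  have hshift : ∀ h ∈ range H, ∑ n ∈ Ico (-H : ℤ) L, z (n + h) = ∑' n, z n := fun h hh => by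
    rw [← (Equiv.addRight (h : ℤ)).tsum_eq z]
    exact (tsum_eq_sum fun n hn => window_eq_zero hz (mem_range.1 hh) hn).symm
  have hsum : H * ‖∑' n, z n‖ ≤ ∑ n ∈ Ico (-H : ℤ) L, ‖∑ h ∈ range H, z (n + h)‖ := by
    refine le_trans (le_of_eq ?_) (norm_sum_le _ _)
    rw [sum_comm, sum_congr rfl hshift, sum_const, card_range, nsmul_eq_mul, norm_mul,
      Complex.norm_natCast]
  have hcard : (#(Ico (-H : ℤ) L) : ℝ) = L + H := by
    rw [Int.card_Ico, sub_neg_eq_add]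
    exact_mod_cast Int.toNat_natCast (L + H)
  have hcs : (H * ‖∑' n, z n‖) ^ 2 ≤
      (L + H) * (H * (2 * ∑ d ∈ range H, ‖autocorrelation z d‖)) := by
    calc _ ≤ (∑ n ∈ Ico (-H : ℤ) L, ‖∑ h ∈ range H, z (n + h)‖) ^ 2 := by gcongr
      _ ≤ (L + H) * ∑ n ∈ Ico (-H : ℤ) L, ‖∑ h ∈ range H, z (n + h)‖ ^ 2 := by
        rw [← hcard]; exact sq_sum_le_card_mul_sum_sq
      _ ≤ _ := by gcongr; exact sum_norm_sq_window_le hz H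
  have hH' : (0 : ℝ) < H := Nat.cast_pos.2 hH
  refine le_of_mul_le_mul_left (a := (H : ℝ)) ?_ hH'
  linarith

end VanDerCorput

lemma tsum_int_eq_sum_range {E : Type*} [AddCommMonoid E] [TopologicalSpace E] {F : ℤ → E}
    {M : ℕ} (hF : ∀ n ∉ Ico (0 : ℤ) M, F n = 0) : ∑' n, F n = ∑ n ∈ range M, F n := by
  rw [tsum_eq_sum hF]
  refine (sum_nbij' Nat.cast Int.toNat ?_ ?_ (fun n _ => Int.toNat_natCast n) ?_
    fun n _ => rfl).symm <;>
  · intro n hn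
    simp only [mem_range, mem_Ico] at hn ⊢
    omega

theorem van_der_corput_eC (a : ℕ → ℝ) (M : ℕ) {H : ℕ} (hH : 0 < H) :
    H * ‖∑ n ∈ range M, eC (a n)‖ ^ 2 ≤
      2 * (M + H) * ∑ d ∈ range H, ‖∑ n ∈ range (M - d), eC (a (n + d) - a n)‖ := by
  set z : ℤ → ℂ := fun n => if n ∈ Ico (0 : ℤ) M then eC (a n.toNat) else 0
  have hz : ∀ n ∉ Ico (0 : ℤ) M, z n = 0 := fun n hn => if_neg hn
  have hz_natCast : ∀ n < M, z n = eC (a n) := fun n hn => by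
    simp only [z, mem_Ico, Nat.cast_nonneg, Nat.cast_lt, hn, and_self, if_true, Int.toNat_natCast]
  have hsum : ∑' n, z n = ∑ n ∈ range M, eC (a n) := by
    rw [tsum_int_eq_sum_range hz]
    exact sum_congr rfl fun n hn => hz_natCast n (mem_range.1 hn)
  have hcorr : ∀ d : ℕ, autocorrelation z d =
      ∑ n ∈ range (M - d), eC (a (n + d) - a n) := fun d => by
    rw [autocorrelation, tsum_int_eq_sum_range (M := M - d)]
    · refine sum_congr rfl fun n hn => ?_
      have hn := mem_range.1 hn
      rw [← Nat.cast_add, hz_natCast _ (by omega), hz_natCast _ (by omega), eC_mul_conj]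
    · intro n hn
      rw [mem_Ico] at hn
      rcases lt_or_ge n 0 with h0 | h0
      · rw [hz n fun h => by rw [mem_Ico] at h; omega, map_zero, mul_zero]
      · rw [hz (n + d) fun h => by rw [mem_Ico] at h; omega, zero_mul]
  simpa only [hsum, hcorr] using van_der_corput hz hH

/-! ### The derivative test -/

/-- On `I`, the functions `ψ j` are the successive derivatives of `ψ 0`, the `k`-th one has size `ρ`
up to the factor `A`, and the next one is smaller by the length scale `L`. -/
structure HasDerivSize (ψ : ℕ → ℝ → ℝ) (k : ℕ) (A ρ L : ℝ) (I : Set ℝ) : Prop where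
  hasDerivAt : ∀ j, ∀ x ∈ I, HasDerivAt (ψ j) (ψ (j + 1) x) x
  le_abs : ∀ x ∈ I, ρ ≤ |ψ k x|
  abs_le : ∀ x ∈ I, |ψ k x| ≤ A * ρ
  abs_succ_le : ∀ x ∈ I, |ψ (k + 1) x| ≤ A * ρ / L

lemma exists_sub_eq_mul_of_hasDerivAt {g g' : ℝ → ℝ} {x d : ℝ} (hd : 0 < d)
    (hg : ∀ t ∈ Set.Icc x (x + d), HasDerivAt g (g' t) t) :
    ∃ t ∈ Set.Icc x (x + d), g (x + d) - g x = d * g' t := by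
  obtain ⟨t, ht, h⟩ := exists_hasDerivAt_eq_slope g g' (lt_add_of_pos_right x hd)
    (fun t ht => (hg t ht).continuousAt.continuousWithinAt)
    fun t ht => hg t (Set.Ioo_subset_Icc_self ht)
  rw [add_sub_cancel_left] at h
  exact ⟨t, Set.Ioo_subset_Icc_self ht, by rw [h, mul_div_cancel₀ _ hd.ne']⟩

namespace HasDerivSize

variable {ψ : ℕ → ℝ → ℝ} {k : ℕ} {A ρ L : ℝ}

lemma difference {R d : ℝ} (h : HasDerivSize ψ (k + 1) A ρ L (Set.Icc 0 R)) (hd : 0 < d) :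
    HasDerivSize (fun j x => ψ j (x + d) - ψ j x) k A (d * ρ) L (Set.Icc 0 (R - d)) := by
  have hsub : ∀ x ∈ Set.Icc 0 (R - d), Set.Icc x (x + d) ⊆ Set.Icc 0 R := fun x hx =>
    Set.Icc_subset_Icc hx.1 (by linarith [hx.2])
  have hmem : ∀ x ∈ Set.Icc 0 (R - d), x ∈ Set.Icc 0 R ∧ x + d ∈ Set.Icc 0 R := fun x hx =>
    ⟨hsub x hx (Set.left_mem_Icc.2 (by linarith)), hsub x hx (Set.right_mem_Icc.2 (by linarith))⟩
  have hmvt : ∀ j, ∀ x ∈ Set.Icc 0 (R - d), ∃ t ∈ Set.Icc 0 R,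
      |ψ j (x + d) - ψ j x| = d * |ψ (j + 1) t| := fun j x hx => by
    obtain ⟨t, ht, h'⟩ := exists_sub_eq_mul_of_hasDerivAt hd
      fun t ht => h.hasDerivAt j t (hsub x hx ht)
    exact ⟨t, hsub x hx ht, by rw [h', abs_mul, abs_of_pos hd]⟩
  refine ⟨fun j x hx => ?_, fun x hx => ?_, fun x hx => ?_, fun x hx => ?_⟩
  · exact ((h.hasDerivAt j _ (hmem x hx).2).comp_add_const x d).sub (h.hasDerivAt j x (hmem x hx).1)
  · obtain ⟨t, ht, h'⟩ := hmvt k x hx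
    rw [h']
    exact mul_le_mul_of_nonneg_left (h.le_abs t ht) hd.le
  · obtain ⟨t, ht, h'⟩ := hmvt k x hx
    rw [h', mul_left_comm]
    exact mul_le_mul_of_nonneg_left (h.abs_le t ht) hd.le
  · obtain ⟨t, ht, h'⟩ := hmvt (k + 1) x hx
    rw [h', mul_left_comm, mul_div_assoc]
    exact mul_le_mul_of_nonneg_left (h.abs_succ_le t ht) hd.le

lemma norm_sum_eC_le_of_le_half {M : ℕ} (h : HasDerivSize ψ 1 A ρ L (Set.Icc 0 M))
    (hA : 0 ≤ A) (hρ : 0 < ρ) (hAρ : A * ρ ≤ 1 / 2) (hL : 0 < L) (hML : M ≤ L) :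
    ‖∑ n ∈ range M, eC (ψ 0 n)‖ ≤ (1 + A) / ρ := by
  have hD := h.difference one_pos
  rw [one_mul] at hD
  have hmem : ∀ n : ℕ, n < M → (n : ℝ) ∈ Set.Icc (0 : ℝ) (M - 1) := fun n hn =>
    ⟨n.cast_nonneg, le_sub_iff_add_le.2 (by exact_mod_cast hn)⟩
  have hstep : ∀ n < M, |ψ 0 (n + 1 : ℕ) - ψ 0 n| ∈ Set.Icc ρ (1 / 2) := fun n hn => by
    rw [Nat.cast_add_one]
    exact ⟨hD.le_abs n (hmem n hn), (hD.abs_le n (hmem n hn)).trans hAρ⟩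
  have hslow : ∀ n, n + 1 < M →
      |ψ 0 (n + 2 : ℕ) - ψ 0 (n + 1 : ℕ) - (ψ 0 (n + 1 : ℕ) - ψ 0 n)| ≤ A * ρ / L := fun n hn => by
    have hsub : Set.Icc (n : ℝ) (n + 1) ⊆ Set.Icc 0 (M - 1) :=
      Set.Icc_subset_Icc n.cast_nonneg (by have := (hmem _ hn).2; rwa [Nat.cast_add_one] at this)
    obtain ⟨t, ht, h'⟩ := exists_sub_eq_mul_of_hasDerivAt one_pos
      fun t ht => hD.hasDerivAt 0 t (hsub ht)
    rw [one_mul] at h'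
    have h2 : ((n + 2 : ℕ) : ℝ) = n + 1 + 1 := by push_cast; ring
    rw [h2, Nat.cast_add_one, h']
    exact hD.abs_succ_le t (hsub ht)
  refine (norm_sum_eC_le_of_slow hρ (by positivity) hstep hslow).trans ?_
  calc 1 / ρ + M * (A * ρ / L / ρ ^ 2) = 1 / ρ + M / L * (A / ρ) := by field_simp
    _ ≤ 1 / ρ + 1 * (A / ρ) := by gcongr; exact (div_le_one hL).2 hML
    _ = (1 + A) / ρ := by ring

lemma norm_sum_eC_le_order_one {M : ℕ} {T : ℝ} (h : HasDerivSize ψ 1 A ρ L (Set.Icc 0 M))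
    (hA : 1 ≤ A) (hML : M ≤ L) (hT : 0 < T) (hTL : T ≤ L) (hTρL : T ≤ ρ * L) (hTρ : T * ρ ≤ 1) :
    ‖∑ n ∈ range M, eC (ψ 0 n)‖ ≤ 2 * A * L / T := by
  have hL : 0 < L := hT.trans_le hTL
  have hρ : 0 < ρ := pos_of_mul_pos_left (hT.trans_le hTρL) hL.le
  rcases le_or_gt (A * ρ) (1 / 2) with hAρ | hAρ
  · refine (h.norm_sum_eC_le_of_le_half (by positivity) hρ hAρ hL hML).trans ?_
    rw [div_le_div_iff₀ hρ hT]
    nlinarith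
  · refine (norm_sum_eC_le _ _).trans ?_
    have hTA : T ≤ 2 * A := by nlinarith
    rw [card_range, le_div_iff₀ hT]
    nlinarith

end HasDerivSize

/-- The range `H` of differencing is `min L (1 / √ρ)`, up to rounding. -/
lemma exists_differencing_range {ρ t : ℝ} {k L : ℕ} (hρ : 0 < ρ) (ht : 1 ≤ t) (htL : t ^ 4 ≤ L)
    (htρL : t ^ 4 ≤ ρ * L ^ (k + 2)) (htρ : t ^ 4 * ρ ≤ 1) :
    ∃ H : ℕ, t ^ 2 ≤ H ∧ H ≤ L ∧ t ^ 2 ≤ H * (ρ * L ^ (k + 1)) ∧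
      ∀ d < H, t ^ 2 * (d * ρ) ≤ 1 := by
  set p := √ρ
  have hp : 0 < p := Real.sqrt_pos.2 hρ
  have hρp : ρ = p ^ 2 := (Real.sq_sqrt hρ.le).symm
  have htp : t ^ 2 * p ≤ 1 := by
    refine (sq_le_one_iff₀ (by positivity)).1 ?_
    rwa [mul_pow, ← pow_mul, ← hρp]
  have ht2 : t ^ 2 ≤ t ^ 4 := pow_le_pow_right₀ ht (by norm_num)
  have hL : 1 ≤ (L : ℝ) := (one_le_pow₀ ht).trans htL
  set y := min (L : ℝ) (1 / p)
  have hty : t ^ 2 ≤ y := le_min (ht2.trans htL) ((le_div_iff₀ hp).2 htp)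
  have hy : t ^ 2 ≤ y * (ρ * L ^ (k + 1)) := by
    rcases min_choice (L : ℝ) (1 / p) with h | h
    · rw [show y = L from h]
      exact ht2.trans (htρL.trans_eq (by ring))
    · have hLp : t ^ 2 ≤ p * L ^ (k + 1) := by
        refine (sq_le_sq₀ (by positivity) (by positivity)).1 ?_
        calc (t ^ 2) ^ 2 = t ^ 4 := by ring
          _ ≤ ρ * L ^ (k + 2) := htρL
          _ ≤ ρ * L ^ ((k + 1) * 2) := by gcongr; omega
          _ = (p * L ^ (k + 1)) ^ 2 := by rw [hρp, mul_pow, pow_mul (L : ℝ)]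
      rw [show y = 1 / p from h, hρp]
      exact hLp.trans_eq (by field_simp)
  refine ⟨⌈y⌉₊, hty.trans (Nat.le_ceil y), Nat.ceil_le.2 (min_le_left _ _), hy.trans ?_,
    fun d hd => ?_⟩
  · gcongr
    exact Nat.le_ceil y
  · have hdp : d * p ≤ 1 :=
      (le_div_iff₀ hp).1 ((Nat.lt_ceil.1 hd).le.trans (min_le_right _ _))
    calc t ^ 2 * (d * ρ) = t ^ 2 * p * (d * p) := by rw [hρp]; ring
      _ ≤ 1 * 1 := mul_le_mul htp hdp (by positivity) zero_le_one
      _ = 1 := one_mul 1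

lemma sum_range_le_of_le_of_le {r : ℕ → ℝ} {H : ℕ} {x L B : ℝ} (hx : 0 ≤ x) (hL : 0 ≤ L)
    (hB : 0 ≤ B) (hrL : ∀ d < H, r d ≤ L) (hrB : ∀ d < H, x ≤ d → r d ≤ B) :
    ∑ d ∈ range H, r d ≤ (x + 1) * L + H * B := by
  have hcard : #{d ∈ range H | d < ⌈x⌉₊} ≤ ⌈x⌉₊ :=
    (card_le_card fun d hd => mem_range.2 (mem_filter.1 hd).2).trans (card_range _).le
  rw [← sum_filter_add_sum_filter_not _ (· < ⌈x⌉₊)]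
  refine add_le_add ((sum_le_card_nsmul _ _ L fun d hd => ?_).trans ?_)
    ((sum_le_card_nsmul _ _ B fun d hd => ?_).trans ?_)
  · exact hrL d (mem_range.1 (mem_filter.1 hd).1)
  · rw [nsmul_eq_mul]
    gcongr
    exact (Nat.cast_le.2 hcard).trans (Nat.ceil_lt_add_one hx).le
  · exact hrB d (mem_range.1 (mem_filter.1 hd).1) (Nat.ceil_le.1 (not_lt.1 (mem_filter.1 hd).2))
  · rw [nsmul_eq_mul]
    gcongr
    exact (card_filter_le _ _).trans (card_range H).le

lemma norm_sum_eC_sq_le_of_differences (a : ℕ → ℝ) {M H L : ℕ} {t β : ℝ} (hML : M ≤ L)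
    (hHL : H ≤ L) (ht : 0 < t) (htH : t ≤ H) (hβ : 0 ≤ β)
    (hdiff : ∀ d < H, H / t ≤ d → ‖∑ n ∈ range (M - d), eC (a (n + d) - a n)‖ ≤ L * β) :
    ‖∑ n ∈ range M, eC (a n)‖ ^ 2 ≤ 4 * L ^ 2 * (2 / t + β) := by
  have hH : (0 : ℝ) < H := ht.trans_le htH
  have htriv : ∀ d < H, ‖∑ n ∈ range (M - d), eC (a (n + d) - a n)‖ ≤ L := fun d _ => by
    refine (norm_sum_eC_le _ _).trans ?_
    rw [card_range]
    exact_mod_cast (M.sub_le d).trans hML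
  have hcorr := sum_range_le_of_le_of_le (by positivity) L.cast_nonneg (by positivity) htriv hdiff
  refine le_of_mul_le_mul_left (a := (H : ℝ)) ?_ hH
  have hone : 1 ≤ H / t := (one_le_div ht).2 htH
  calc H * ‖∑ n ∈ range M, eC (a n)‖ ^ 2
      ≤ 2 * (M + H) * ∑ d ∈ range H, ‖∑ n ∈ range (M - d), eC (a (n + d) - a n)‖ :=
        van_der_corput_eC a M (Nat.cast_pos.1 hH)
    _ ≤ 2 * (L + L) * ((H / t + H / t) * L + H * (L * β)) := by
        gcongr
        exact hcorr.trans (by gcongr)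
    _ = H * (4 * L ^ 2 * (2 / t + β)) := by ring

lemma HasDerivSize.norm_sum_eC_le_of_difference {ψ : ℕ → ℝ → ℝ} {k M H L : ℕ} {A ρ t β : ℝ}
    (h : HasDerivSize ψ (k + 2) A ρ L (Set.Icc 0 M)) (hML : M ≤ L) (hHL : H ≤ L) (ht : 1 ≤ t)
    (htH : t ^ 2 ≤ H) (htρL : t ^ 2 ≤ H * (ρ * L ^ (k + 1)))
    (htρ : ∀ d < H, t ^ 2 * (d * ρ) ≤ 1) (hβ : 0 ≤ β)
    (ih : ∀ {ψ' : ℕ → ℝ → ℝ} {ρ' : ℝ} {M' : ℕ},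
      HasDerivSize ψ' (k + 1) A ρ' L (Set.Icc 0 M') → M' ≤ L → t ≤ ρ' * L ^ (k + 1) →
      t * ρ' ≤ 1 → ‖∑ n ∈ range M', eC (ψ' 0 n)‖ ≤ L * β) :
    ‖∑ n ∈ range M, eC (ψ 0 n)‖ ^ 2 ≤ 4 * L ^ 2 * (2 / t + β) := by
  have ht0 : 0 < t := one_pos.trans_le ht
  have htt : t ≤ t ^ 2 := le_self_pow₀ ht two_ne_zero
  refine norm_sum_eC_sq_le_of_differences (fun n => ψ 0 n) hML hHL ht0 (htt.trans htH) hβ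
    fun d hd hHd => ?_
  rcases le_total M d with hMd | hdM
  · rw [Nat.sub_eq_zero_of_le hMd, range_zero, sum_empty, norm_zero]
    positivity
  have hd0 : (0 : ℝ) < d := (div_pos ((pow_pos ht0 2).trans_le htH) ht0).trans_le hHd
  have hD := h.difference hd0
  rw [← Nat.cast_sub hdM] at hD
  have hρ : 0 ≤ ρ * L ^ (k + 1) :=
    (pos_of_mul_pos_right ((pow_pos ht0 2).trans_le htρL) (Nat.cast_nonneg H)).le
  have hlarge : t ≤ d * ρ * L ^ (k + 1) := by
    refine le_of_mul_le_mul_left (a := t) ?_ ht0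
    calc t * t = t ^ 2 := (sq t).symm
      _ ≤ H * (ρ * L ^ (k + 1)) := htρL
      _ ≤ d * t * (ρ * L ^ (k + 1)) := by gcongr; exact (div_le_iff₀ ht0).1 hHd
      _ = t * (d * ρ * L ^ (k + 1)) := by ring
  have hdρ : 0 ≤ d * ρ := (pos_of_mul_pos_left (ht0.trans_le hlarge) (by positivity)).le
  have hsmall : t * (d * ρ) ≤ 1 := (by gcongr : t * (d * ρ) ≤ t ^ 2 * (d * ρ)).trans (htρ d hd)
  simpa only [Nat.cast_add] using ih hD ((M.sub_le d).trans hML) hlarge hsmall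

lemma le_mul_rpow_of_sq_le {S A L t κ : ℝ} (hA : 1 ≤ A) (hL : 0 ≤ L) (ht : 1 ≤ t) (hκ : κ ≤ 1)
    (hS : S ^ 2 ≤ 4 * L ^ 2 * (2 / t + 6 * A * t ^ (-κ))) :
    S ≤ 6 * A * L * (t ^ 4) ^ (-(κ / 8)) := by
  have ht0 : 0 < t := one_pos.trans_le ht
  have hone : 2 / t ≤ 2 * A * t ^ (-κ) := by
    rw [div_eq_mul_inv, ← Real.rpow_neg_one]
    gcongr
    linarith
  have hsq : ((t ^ 4) ^ (-(κ / 8))) ^ 2 = t ^ (-κ) := by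
    rw [← Real.rpow_mul_natCast (by positivity), ← Real.rpow_natCast, ← Real.rpow_mul ht0.le]
    congr 1
    push_cast; ring
  refine le_of_sq_le_sq (hS.trans ?_) (by positivity)
  calc 4 * L ^ 2 * (2 / t + 6 * A * t ^ (-κ))
      ≤ 4 * L ^ 2 * (2 * A * t ^ (-κ) + 6 * A * t ^ (-κ)) := by gcongr
    _ = 32 * A * (L ^ 2 * t ^ (-κ)) := by ring
    _ ≤ 36 * A ^ 2 * (L ^ 2 * t ^ (-κ)) := by gcongr ?_ * _; nlinarith
    _ = (6 * A * L * (t ^ 4) ^ (-(κ / 8))) ^ 2 := by rw [mul_pow _ (_ ^ _), hsq]; ring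

/-- The `k`-th derivative test: induction on `k`, differencing the phase once in each step. The
size `T` measures by how much both `L` and the `k`-th derivative exceed their trivial values. -/
theorem HasDerivSize.norm_sum_eC_le_rpow {A : ℝ} {L : ℕ} (hA : 1 ≤ A) (k : ℕ) :
    ∀ {ψ : ℕ → ℝ → ℝ} {ρ T : ℝ} {M : ℕ}, HasDerivSize ψ (k + 1) A ρ L (Set.Icc 0 M) → M ≤ L →
      0 < T → T ≤ L → T ≤ ρ * L ^ (k + 1) → T * ρ ≤ 1 →
      ‖∑ n ∈ range M, eC (ψ 0 n)‖ ≤ 6 * A * L * T ^ (-(1 / 8 : ℝ) ^ k) := by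
  induction k with
  | zero =>
    intro ψ ρ T M h hML hT hTL hTρL hTρ
    rw [zero_add, pow_one] at hTρL
    refine (h.norm_sum_eC_le_order_one hA (by exact_mod_cast hML) hT hTL hTρL hTρ).trans ?_
    rw [pow_zero, Real.rpow_neg_one, ← div_eq_mul_inv]
    gcongr
    norm_num
  | succ k ih =>
    intro ψ ρ T M h hML hT hTL hTρL hTρ
    have hρ : 0 < ρ := pos_of_mul_pos_left (hT.trans_le hTρL) (by positivity)
    rcases le_or_gt T 1 with hT1 | hT1
    · have hpow : 1 ≤ T ^ (-(1 / 8 : ℝ) ^ (k + 1)) :=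
        Real.one_le_rpow_of_pos_of_le_one_of_nonpos hT hT1 (neg_nonpos.2 (by positivity))
      calc _ ≤ (M : ℝ) := (norm_sum_eC_le _ _).trans_eq (by rw [card_range])
        _ ≤ 1 * L * 1 := by rw [one_mul, mul_one]; exact_mod_cast hML
        _ ≤ _ := by gcongr; linarith
    obtain ⟨t, ht, rfl⟩ : ∃ t : ℝ, 1 ≤ t ∧ t ^ 4 = T :=
      ⟨T ^ (1 / 4 : ℝ), Real.one_le_rpow hT1.le (by norm_num), by
        rw [← Real.rpow_natCast, ← Real.rpow_mul hT.le]; norm_num⟩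
    have ht0 : 0 < t := one_pos.trans_le ht
    obtain ⟨H, htH, hHL, hlarge, hsmall⟩ := exists_differencing_range hρ ht hTL hTρL hTρ
    rw [pow_succ (1 / 8 : ℝ), mul_one_div]
    exact le_mul_rpow_of_sq_le hA L.cast_nonneg ht (pow_le_one₀ (by norm_num) (by norm_num))
      (h.norm_sum_eC_le_of_difference hML hHL ht htH hlarge hsmall (by positivity)
        fun h' hM' hl hs =>
          (ih h' hM' ht0 ((le_self_pow₀ ht four_ne_zero).trans hTL) hl hs).trans_eq (by ring))

/-! ### The phase `∑ λ_i t ^ c_i` and its derivatives -/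

/-- The falling factorial `c (c - 1) ⋯ (c - k + 1)`, the coefficient in the `k`-th derivative of
`t ^ c`. -/
def fallFac (c : ℝ) (k : ℕ) : ℝ := (descPochhammer ℝ k).eval c

lemma fallFac_zero (c : ℝ) : fallFac c 0 = 1 := by
  rw [fallFac, descPochhammer_zero, Polynomial.eval_one]

lemma fallFac_succ (c : ℝ) (k : ℕ) : fallFac c (k + 1) = fallFac c k * (c - k) :=
  descPochhammer_succ_eval k c

lemma fallFac_add (c : ℝ) (K j : ℕ) : fallFac c (K + j) = fallFac c K * fallFac (c - K) j := by
  rw [fallFac, ← descPochhammer_mul, Polynomial.eval_mul, Polynomial.eval_comp,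
    Polynomial.eval_sub, Polynomial.eval_X, Polynomial.eval_natCast]
  rfl

lemma fallFac_ne_zero {c : ℝ} (hc : ∀ k : ℤ, c ≠ k) (K : ℕ) : fallFac c K ≠ 0 := by
  induction K with
  | zero => rw [fallFac_zero]; exact one_ne_zero
  | succ K ih =>
    rw [fallFac_succ]
    exact mul_ne_zero ih (sub_ne_zero.2 (by exact_mod_cast hc K))

lemma eq_zero_of_sum_mul_fallFac_eq_zero {m : ℕ} {x v : Fin m → ℝ} (hx : Function.Injective x)
    (hv : ∀ j : Fin m, ∑ i, v i * fallFac (x i) j = 0) : v = 0 := by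
  refine Matrix.eq_zero_of_vecMul_eq_zero
    (M := Matrix.of fun i j : Fin m => (descPochhammer ℝ (j : ℕ)).eval (x i)) ?_ (funext hv)
  rw [← Matrix.det_eval_matrixOfPolynomials_eq_det_vandermonde x
    (fun j : Fin m => descPochhammer ℝ j) (fun j => descPochhammer_natDegree ℝ j)
    fun j => monic_descPochhammer ℝ j]
  exact Matrix.det_vandermonde_ne_zero_iff.2 hx

section Phase

variable {ι : Type*} [Fintype ι]

/-- The `k`-th derivative of the phase `∑ i, lam i * t ^ c i`. -/
def phase (c lam : ι → ℝ) (k : ℕ) (t : ℝ) : ℝ := ∑ i, lam i * (fallFac (c i) k * t ^ (c i - k))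

/-- The size of the phase `∑ i, lam i * t ^ c i` at the scale `t ≍ N`. -/
def phaseSize (c lam : ι → ℝ) (N : ℝ) : ℝ := ‖fun i => lam i * N ^ c i‖

lemma phase_zero (c lam : ι → ℝ) (t : ℝ) : phase c lam 0 t = ∑ i, lam i * t ^ c i := by
  simp only [phase, fallFac_zero, one_mul, Nat.cast_zero, sub_zero]

lemma phase_smul (c lam : ι → ℝ) (r : ℝ) (k : ℕ) (t : ℝ) :
    phase c (r • lam) k t = r * phase c lam k t := by
  simp only [phase, Pi.smul_apply, smul_eq_mul, mul_assoc, mul_sum]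

lemma phase_mul (c lam : ι → ℝ) (k : ℕ) {N t : ℝ} (hN : 0 < N) (ht : 0 ≤ t) :
    phase c lam k (N * t) = phase c (fun i => lam i * N ^ c i) k t / N ^ k := by
  rw [phase, phase, sum_div]
  refine sum_congr rfl fun i _ => ?_
  rw [Real.mul_rpow hN.le ht, Real.rpow_sub hN, Real.rpow_natCast]
  ring

lemma hasDerivAt_phase (c lam : ι → ℝ) (k : ℕ) {t : ℝ} (ht : 0 < t) :
    HasDerivAt (phase c lam k) (phase c lam (k + 1) t) t := by
  refine HasDerivAt.fun_sum fun i _ => HasDerivAt.const_mul _ ?_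
  have h := (Real.hasDerivAt_rpow_const (p := c i - k) (Or.inl ht.ne')).const_mul (fallFac (c i) k)
  rwa [← mul_assoc, ← fallFac_succ, sub_sub, ← Nat.cast_add_one] at h

lemma exists_abs_phase_le (c : ι → ℝ) (n : ℕ) : ∃ A, 0 < A ∧ ∀ k ≤ n, ∀ u : ι → ℝ,
    ∀ s ∈ Set.Icc (1 / 2 : ℝ) 2, |phase c u k s| ≤ A * ‖u‖ := by
  have hcont : ContinuousOn
      (fun s : ℝ => ∑ k ∈ range (n + 1), ∑ i, |fallFac (c i) k * s ^ (c i - k)|)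
      (Set.Icc (1 / 2) 2) := by
    refine continuousOn_finsetSum _ fun k _ => continuousOn_finsetSum _ fun i _ =>
      (continuousOn_const.mul (continuousOn_id.rpow_const fun s hs => Or.inl ?_)).abs
    exact (lt_of_lt_of_le one_half_pos hs.1).ne'
  obtain ⟨A, hA⟩ := isCompact_Icc.exists_bound_of_continuousOn hcont
  refine ⟨|A| + 1, by positivity, fun k hk u s hs => ?_⟩
  calc |phase c u k s| ≤ ∑ i, ‖u‖ * |fallFac (c i) k * s ^ (c i - k)| := by
        refine (abs_sum_le_sum_abs _ _).trans (sum_le_sum fun i _ => ?_)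
        rw [abs_mul]
        exact mul_le_mul_of_nonneg_right (norm_le_pi_norm u i) (abs_nonneg _)
    _ = ‖u‖ * ∑ i, |fallFac (c i) k * s ^ (c i - k)| := (mul_sum _ _ _).symm
    _ ≤ ‖u‖ * (|A| + 1) := by
        gcongr
        refine (single_le_sum (f := fun k => ∑ i, |fallFac (c i) k * s ^ (c i - k)|)
          (fun _ _ => by positivity) (mem_range_succ_iff.2 hk)).trans ?_
        linarith [(le_abs_self _).trans (hA s hs), le_abs_self A]
    _ = (|A| + 1) * ‖u‖ := mul_comm _ _

lemma abs_phase_sub_le {c u : ι → ℝ} {k : ℕ} {B s s' : ℝ}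
    (hB : ∀ s ∈ Set.Icc (1 / 2 : ℝ) 2, |phase c u (k + 1) s| ≤ B)
    (hs : s ∈ Set.Icc (1 / 2 : ℝ) 2) (hs' : s' ∈ Set.Icc (1 / 2 : ℝ) 2) :
    |phase c u k s' - phase c u k s| ≤ B * |s' - s| :=
  (convex_Icc _ _).norm_image_sub_le_of_norm_hasDerivWithin_le
    (fun _ ht => (hasDerivAt_phase c u k (one_half_pos.trans_le ht.1)).hasDerivWithinAt) hB hs hs'

end Phase

section Nondegeneracy

variable {m : ℕ} {c : Fin m → ℝ}

/-- Up to the nonzero factors `fallFac (c i) K * s ^ (c i - K)`, the coefficients of the derivatives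
are the values of monic polynomials of degrees `0, …, m - 1` at the distinct points `c i - K`. -/
lemma eq_zero_of_phase_eq_zero (hc : Function.Injective c) (hint : ∀ i, ∀ k : ℤ, c i ≠ k) (K : ℕ)
    {u : Fin m → ℝ} {s : ℝ} (hs : 0 < s) (hu : ∀ j : Fin m, phase c u (K + j) s = 0) : u = 0 := by
  have hv : (fun i => u i * (fallFac (c i) K * s ^ (c i - K))) = 0 := by
    refine eq_zero_of_sum_mul_fallFac_eq_zero (x := fun i => c i - K)
      (fun _ _ h => hc (sub_left_injective h)) fun j => ?_
    have h : ∀ i, u i * (fallFac (c i) K * s ^ (c i - K)) * fallFac (c i - K) j =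
        u i * (fallFac (c i) (K + j) * s ^ (c i - (K + j : ℕ))) * s ^ (j : ℕ) := fun i => by
      rw [fallFac_add, Nat.cast_add, ← sub_sub, Real.rpow_sub hs _ (j : ℕ), Real.rpow_natCast s j]
      field_simp
    simp only [h, ← sum_mul]
    exact mul_eq_zero_of_left (hu j) _
  funext i
  exact (mul_eq_zero.1 (congrFun hv i)).resolve_right
    (mul_ne_zero (fallFac_ne_zero (hint i) K) (Real.rpow_pos_of_pos hs _).ne')

lemma exists_le_abs_phase (hm : 0 < m) (hc : Function.Injective c)
    (hint : ∀ i, ∀ k : ℤ, c i ≠ k) (K : ℕ) :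
    ∃ δ, 0 < δ ∧ ∀ u : Fin m → ℝ, ∀ s ∈ Set.Icc (1 / 2 : ℝ) 2,
      ∃ j : Fin m, δ * ‖u‖ ≤ |phase c u (K + j) s| := by
  have : Nonempty (Fin m) := ⟨⟨0, hm⟩⟩
  set F : (Fin m → ℝ) × ℝ → Fin m → ℝ := fun p j => phase c p.1 (K + j) p.2
  have hF : ContinuousOn F (Metric.sphere 0 1 ×ˢ Set.Icc (1 / 2) 2) := by
    refine continuousOn_pi.2 fun j => continuousOn_finsetSum _ fun i _ => ?_
    refine ((continuous_apply i).comp continuous_fst).continuousOn.mul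
      (continuousOn_const.mul (continuousOn_snd.rpow_const fun p hp => Or.inl ?_))
    exact (one_half_pos.trans_le hp.2.1).ne'
  obtain ⟨p, hp, hmin⟩ := ((isCompact_sphere _ _).prod isCompact_Icc).exists_isMinOn
    ((NormedSpace.sphere_nonempty.2 zero_le_one).prod (Set.nonempty_Icc.2 (by norm_num))) hF.norm
  have hpos : 0 < ‖F p‖ := norm_pos_iff.2 fun h0 => by
    have := eq_zero_of_phase_eq_zero hc hint K (one_half_pos.trans_le hp.2.1) (congrFun h0)
    exact Metric.ne_of_mem_sphere hp.1 one_ne_zero this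
  refine ⟨‖F p‖, hpos, fun u s hs => ?_⟩
  by_contra! hlt
  have hu : 0 < ‖u‖ := pos_of_mul_pos_right ((abs_nonneg _).trans_lt (hlt ⟨0, hm⟩)) hpos.le
  have hmem : (‖u‖⁻¹ • u, s) ∈ Metric.sphere (0 : Fin m → ℝ) 1 ×ˢ Set.Icc (1 / 2 : ℝ) 2 :=
    ⟨by simp [norm_smul, hu.ne'], hs⟩
  refine (hmin hmem).not_gt ((pi_norm_lt_iff hpos).2 fun j => ?_)
  change |phase c (‖u‖⁻¹ • u) _ s| < _
  rw [phase_smul, abs_mul, abs_of_pos (inv_pos.2 hu), inv_mul_lt_iff₀ hu, mul_comm]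
  exact hlt j

lemma exists_phase_bounds (hm : 0 < m) (hc : Function.Injective c)
    (hint : ∀ i, ∀ k : ℤ, c i ≠ k) (K : ℕ) :
    ∃ A δ : ℝ, 1 ≤ A ∧ 0 < δ ∧ ∀ u : Fin m → ℝ, ∀ s₀ ∈ Set.Icc (1 / 2 : ℝ) 2, ∃ j : Fin m,
      ∀ s ∈ Set.Icc (1 / 2 : ℝ) 2, A * |s - s₀| ≤ 1 → δ * ‖u‖ ≤ |phase c u (K + j) s| ∧
        |phase c u (K + j) s| ≤ A * (δ * ‖u‖) ∧ |phase c u (K + j + 1) s| ≤ A * (δ * ‖u‖) := by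
  obtain ⟨B, _, hBle⟩ := exists_abs_phase_le c (K + m)
  obtain ⟨δ, hδ, hδle⟩ := exists_le_abs_phase hm hc hint K
  set A := max 1 (2 * B / δ)
  have hBA : B ≤ A * (δ / 2) := by
    have := (div_le_iff₀ hδ).1 (le_max_right 1 (2 * B / δ))
    linarith
  have : 0 < A := one_pos.trans_le (le_max_left _ _)
  refine ⟨A, δ / 2, le_max_left _ _, half_pos hδ, fun u s₀ hs₀ => ?_⟩
  obtain ⟨j, hj⟩ := hδle u s₀ hs₀
  have hup : ∀ k ≤ K + m, ∀ s ∈ Set.Icc (1 / 2 : ℝ) 2, |phase c u k s| ≤ A * (δ / 2 * ‖u‖) :=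
    fun k hk s hs => (hBle k hk u s hs).trans
      ((mul_le_mul_of_nonneg_right hBA (norm_nonneg u)).trans_eq (mul_assoc _ _ _))
  refine ⟨j, fun s hs hss => ⟨?_, hup _ (by lia) s hs, hup _ (by lia) s hs⟩⟩
  have hdiff : |phase c u (K + j) s - phase c u (K + j) s₀| ≤ δ / 2 * ‖u‖ :=
    calc _ ≤ A * (δ / 2 * ‖u‖) * |s - s₀| := abs_phase_sub_le (hup _ (by lia)) hs₀ hs
      _ = δ / 2 * ‖u‖ * (A * |s - s₀|) := by ring
      _ ≤ δ / 2 * ‖u‖ := mul_le_of_le_one_right (by positivity) hss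
  linarith [abs_sub_abs_le_abs_sub (phase c u (K + j) s₀) (phase c u (K + j) s),
    abs_sub_comm (phase c u (K + j) s₀) (phase c u (K + j) s)]

theorem exists_hasDerivSize_phase (hm : 0 < m) (hc : Function.Injective c)
    (hint : ∀ i, ∀ k : ℤ, c i ≠ k) (K : ℕ) :
    ∃ A δ : ℝ, 1 ≤ A ∧ 0 < δ ∧ ∀ (lam : Fin m → ℝ) (N a M L : ℝ), 0 < L → A * L ≤ N →
      0 ≤ M → M ≤ L → N / 2 ≤ a → a + M ≤ 2 * N → ∃ j : Fin m,
        HasDerivSize (fun k x => phase c lam k (a + x)) (K + j) A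
          (δ * phaseSize c lam N / N ^ (K + j)) L (Set.Icc 0 M) := by
  obtain ⟨A, δ, hA, hδ, h⟩ := exists_phase_bounds hm hc hint K
  refine ⟨A, δ, hA, hδ, fun lam N a M L hL hLN hM hML haN haM => ?_⟩
  have hN : 0 < N := (by positivity : 0 < A * L).trans_le hLN
  have hmem : ∀ x ∈ Set.Icc 0 M, (a + x) / N ∈ Set.Icc (1 / 2 : ℝ) 2 := fun x hx =>
    ⟨by rw [le_div_iff₀ hN]; linarith [hx.1], by rw [div_le_iff₀ hN]; linarith [hx.2]⟩
  have hscale : ∀ k, ∀ x ∈ Set.Icc 0 M, |phase c lam k (a + x)| =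
      |phase c (fun i => lam i * N ^ c i) k ((a + x) / N)| / N ^ k := fun k x hx => by
    have := phase_mul c lam k hN (one_half_pos.le.trans (hmem x hx).1)
    rw [mul_div_cancel₀ _ hN.ne'] at this
    rw [this, abs_div, abs_of_pos (pow_pos hN k)]
  obtain ⟨j, hj⟩ := h (fun i => lam i * N ^ c i) ((a + 0) / N) (hmem 0 (Set.left_mem_Icc.2 hM))
  have hclose : ∀ x ∈ Set.Icc 0 M, A * |(a + x) / N - (a + 0) / N| ≤ 1 := fun x hx => by
    rw [← sub_div, add_sub_add_left_eq_sub, sub_zero, abs_of_nonneg (div_nonneg hx.1 hN.le),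
      ← mul_div_assoc, div_le_one hN]
    exact (mul_le_mul_of_nonneg_left (hx.2.trans hML) (by positivity)).trans hLN
  refine ⟨j, fun k x hx => ?_, fun x hx => ?_, fun x hx => ?_, fun x hx => ?_⟩
  · exact (hasDerivAt_phase c lam k (by linarith [hx.1])).comp_const_add a x
  · rw [hscale _ x hx]
    exact div_le_div_of_nonneg_right (hj _ (hmem x hx) (hclose x hx)).1 (by positivity)
  · rw [hscale _ x hx, ← mul_div_assoc]
    exact div_le_div_of_nonneg_right (hj _ (hmem x hx) (hclose x hx)).2.1 (by positivity)
  · rw [hscale _ x hx, pow_succ, ← div_div, ← mul_div_assoc]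
    exact div_le_div₀ (div_nonneg (mul_nonneg (by positivity) (mul_nonneg hδ.le (norm_nonneg _)))
      (by positivity))
      (div_le_div_of_nonneg_right (hj _ (hmem x hx) (hclose x hx)).2.2 (by positivity)) hL
      ((le_mul_of_one_le_left hL.le hA).trans hLN)

end Nondegeneracy

/-! ### Exponential sums -/

lemma norm_sum_range_le_of_blocks {E : Type*} [SeminormedAddCommGroup E] {g : ℕ → E} {D L : ℕ}
    {B : ℝ} (h : ∀ a M, M ≤ L → a + M ≤ D → ‖∑ n ∈ range M, g (a + n)‖ ≤ B) (J : ℕ) :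
    ∀ {d : ℕ}, d ≤ D → d ≤ J * L → ‖∑ n ∈ range d, g n‖ ≤ J * B := by
  induction J with
  | zero =>
    intro d _ hd
    obtain rfl : d = 0 := by simpa using hd
    simp only [range_zero, sum_empty, norm_zero, Nat.cast_zero, zero_mul, le_refl]
  | succ J ih =>
    intro d hdD hd
    rw [add_one_mul] at hd
    obtain ⟨M, hML, hM⟩ : ∃ M ≤ L, d - L + M = d := ⟨d - (d - L), by lia, by lia⟩
    rw [← hM, sum_range_add]
    calc _ ≤ J * B + B := (norm_add_le _ _).trans
          (add_le_add (ih (by lia) (by lia)) (h _ M hML (by lia)))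
      _ = (J + 1 : ℕ) * B := by push_cast; ring

lemma phaseSize_nonneg {ι : Type*} [Fintype ι] (c lam : ι → ℝ) (N : ℝ) : 0 ≤ phaseSize c lam N :=
  norm_nonneg _

lemma phaseSize_le_pow {ι : Type*} [Fintype ι] {c lam : ι → ℝ} {N : ℝ} {K : ℕ} (hN : 1 ≤ N)
    (hK : ∀ i, c i + 1 ≤ K) (hlam : ∀ i, |lam i| ≤ N) : phaseSize c lam N ≤ N ^ K := by
  have hN0 := one_pos.trans_le hN
  refine (pi_norm_le_iff_of_nonneg (by positivity)).2 fun i => ?_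
  rw [norm_mul, Real.norm_of_nonneg (Real.rpow_nonneg hN0.le _)]
  calc |lam i| * N ^ c i ≤ N * N ^ c i := by gcongr; exact hlam i
    _ = N ^ (c i + 1) := by rw [Real.rpow_add_one hN0.ne', mul_comm]
    _ ≤ N ^ K := by
      rw [← Real.rpow_natCast]
      exact Real.rpow_le_rpow_of_exponent_le hN (hK i)

lemma exists_admissible_time {A δ : ℝ} (hA : 1 ≤ A) (hδ : 0 < δ) (p : ℕ) :
    ∃ γ, 0 < γ ∧ γ ≤ 1 ∧ ∀ {N Λ : ℝ} {L k : ℕ}, 0 < N → 0 ≤ Λ → N ≤ 2 * A * L → k ≤ p →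
      Λ * N ≤ N ^ k → γ * min N Λ ≤ L ∧ γ * min N Λ ≤ δ * Λ / N ^ k * L ^ k ∧
        γ * min N Λ * (δ * Λ / N ^ k) ≤ 1 := by
  have hA2 : 1 ≤ 2 * A := by linarith
  have hA0 : 0 < 2 * A := by linarith
  refine ⟨min (2 * A)⁻¹ (min (δ / (2 * A) ^ p) δ⁻¹), by positivity,
    (min_le_left _ _).trans (inv_le_one_of_one_le₀ hA2), fun {N Λ L k} hN hΛ hL hk hΛN => ?_⟩
  set γ := min (2 * A)⁻¹ (min (δ / (2 * A) ^ p) δ⁻¹)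
  have : 0 ≤ γ := by positivity
  refine ⟨?_, ?_, ?_⟩
  · calc γ * min N Λ ≤ (2 * A)⁻¹ * (2 * A * L) := mul_le_mul (min_le_left _ _)
          ((min_le_left _ _).trans hL) (le_min hN.le hΛ) (by positivity)
      _ = L := inv_mul_cancel_left₀ hA0.ne' _
  · have hLN : (2 * A)⁻¹ ≤ L / N := by
      rw [inv_le_iff_one_le_mul₀ hA0, div_mul_eq_mul_div, one_le_div hN]
      linarith
    calc γ * min N Λ ≤ δ / (2 * A) ^ p * Λ := mul_le_mul
          ((min_le_right _ _).trans (min_le_left _ _)) (min_le_right _ _) (le_min hN.le hΛ)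
          (by positivity)
      _ ≤ δ / (2 * A) ^ k * Λ := by gcongr
      _ = δ * Λ * (2 * A)⁻¹ ^ k := by rw [inv_pow]; ring
      _ ≤ δ * Λ * (L / N) ^ k := by gcongr
      _ = δ * Λ / N ^ k * L ^ k := by rw [div_pow]; ring
  · calc γ * min N Λ * (δ * Λ / N ^ k) ≤ δ⁻¹ * N * (δ * Λ / N ^ k) := by
          gcongr
          exacts [(min_le_right _ _).trans (min_le_right _ _), min_le_left _ _]
      _ = Λ * N / N ^ k := by field_simp
      _ ≤ 1 := div_le_one_of_le₀ hΛN (by positivity)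

lemma rpow_neg_mul_le {γ X κ κ' : ℝ} (hγ : 0 < γ) (hγ' : γ ≤ 1) (hX : 1 ≤ X) (hκ : κ ≤ κ')
    (hκ' : κ' ≤ 1) : (γ * X) ^ (-κ') ≤ γ⁻¹ * X ^ (-κ) := by
  rw [Real.mul_rpow hγ.le (by linarith), ← Real.rpow_neg_one]
  exact mul_le_mul (Real.rpow_le_rpow_of_exponent_ge hγ hγ' (neg_le_neg hκ'))
    (Real.rpow_le_rpow_of_exponent_le hX (neg_le_neg hκ)) (by positivity) (by positivity)

section

variable {m : ℕ} {c : Fin m → ℝ}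

lemma exists_norm_block_le (hm : 0 < m) (hc : Function.Injective c)
    (hint : ∀ i, ∀ k : ℤ, c i ≠ k) :
    ∃ A C κ : ℝ, 1 ≤ A ∧ 0 < C ∧ 0 < κ ∧ κ ≤ 1 ∧ ∀ (N a : ℕ) (lam : Fin m → ℝ) (M L : ℕ),
      0 < L → A * L ≤ N → N ≤ 2 * A * L → M ≤ L → (N : ℝ) / 2 ≤ a → a + M ≤ 2 * N →
      (∀ i, |lam i| ≤ N) → 1 ≤ min (N : ℝ) (phaseSize c lam N) →
      ‖∑ n ∈ range M, eC (phase c lam 0 ((a + n : ℕ)))‖ ≤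
        C * N * min (N : ℝ) (phaseSize c lam N) ^ (-κ) := by
  obtain ⟨K, hK⟩ : ∃ K : ℕ, ∀ i, c i + 1 ≤ K :=
    (exists_nat_ge (‖c‖ + 1)).imp fun K hK i => by
      linarith [(le_abs_self (c i)).trans (norm_le_pi_norm c i)]
  obtain ⟨A, δ, hA, hδ, hphase⟩ := exists_hasDerivSize_phase hm hc hint (K + 1)
  obtain ⟨γ, hγ, hγ1, hT⟩ := exists_admissible_time hA hδ (K + m)
  refine ⟨A, 6 / γ, (1 / 8) ^ (K + m), hA, by positivity, by positivity,
    pow_le_one₀ (by norm_num) (by norm_num), fun N a lam M L hL hALN hNAL hML haN haM hlam hX => ?_⟩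
  set Λ := phaseSize c lam N
  have hN : 1 ≤ (N : ℝ) := hX.trans (min_le_left _ _)
  obtain ⟨j, hj⟩ := hphase lam N a M L (by exact_mod_cast hL) hALN M.cast_nonneg
    (by exact_mod_cast hML) haN (by exact_mod_cast haM)
  rw [add_right_comm] at hj
  have hΛN : Λ * N ≤ (N : ℝ) ^ (K + j + 1) :=
    calc Λ * N ≤ (N : ℝ) ^ (K + j) * N := by
          gcongr
          exact (phaseSize_le_pow hN hK hlam).trans (pow_le_pow_right₀ hN (Nat.le_add_right _ _))
      _ = (N : ℝ) ^ (K + j + 1) := (pow_succ _ _).symm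
  obtain ⟨hTL, hTρ, hρT⟩ := hT (by linarith) (phaseSize_nonneg c lam N) hNAL (by lia) hΛN
  calc ‖∑ n ∈ range M, eC (phase c lam 0 ((a + n : ℕ)))‖
      ≤ 6 * A * L * (γ * min (N : ℝ) Λ) ^ (-(1 / 8 : ℝ) ^ (K + (j : ℕ))) := by
        simpa only [Nat.cast_add] using
          hj.norm_sum_eC_le_rpow hA _ hML (mul_pos hγ (by linarith)) hTL hTρ hρT
    _ ≤ 6 * N * (γ⁻¹ * min (N : ℝ) Λ ^ (-(1 / 8 : ℝ) ^ (K + m))) := by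
        rw [mul_assoc 6]
        refine mul_le_mul (by gcongr) (rpow_neg_mul_le hγ hγ1 hX ?_ ?_)
          (Real.rpow_nonneg (mul_nonneg hγ.le (by linarith)) _) (by positivity)
        · exact pow_le_pow_of_le_one (by norm_num) (by norm_num) (by lia)
        · exact pow_le_one₀ (by norm_num) (by norm_num)
    _ = 6 / γ * N * min (N : ℝ) Λ ^ (-(1 / 8 : ℝ) ^ (K + m)) := by ring

lemma exists_block_length {A : ℝ} {N : ℕ} (hA : 1 ≤ A) (hAN : A ≤ N) :
    ∃ L : ℕ, 0 < L ∧ A * L ≤ N ∧ N ≤ 2 * A * L := by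
  have hA0 : 0 < A := one_pos.trans_le hA
  have hL : 0 < ⌊N / A⌋₊ := Nat.floor_pos.2 ((one_le_div hA0).2 hAN)
  refine ⟨⌊N / A⌋₊, hL, (le_div_iff₀' hA0).1 (Nat.floor_le (by positivity)), ?_⟩
  calc (N : ℝ) ≤ A * (⌊N / A⌋₊ + 1) := ((div_lt_iff₀' hA0).1 (Nat.lt_floor_add_one _)).le
    _ ≤ A * (⌊N / A⌋₊ + ⌊N / A⌋₊) := by gcongr; exact_mod_cast hL
    _ = 2 * A * ⌊N / A⌋₊ := by ring

theorem exists_norm_sum_phase_le (hm : 0 < m) (hc : Function.Injective c)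
    (hint : ∀ i, ∀ k : ℤ, c i ≠ k) :
    ∃ C κ : ℝ, 0 < C ∧ 0 < κ ∧ κ ≤ 1 ∧ ∀ (N : ℕ) (lam : Fin m → ℝ), (∀ i, |lam i| ≤ N) →
      0 < min (N : ℝ) (phaseSize c lam N) →
      ‖∑ n ∈ Ioc (N / 2) N, eC (phase c lam 0 n)‖ ≤
        C * N * min (N : ℝ) (phaseSize c lam N) ^ (-κ) := by
  obtain ⟨A, C, κ, hA, _, hκ, hκ1, hblock⟩ := exists_norm_block_le hm hc hint
  refine ⟨max A (⌈2 * A⌉₊ * C), κ, by positivity, hκ, hκ1, fun N lam hlam hX0 => ?_⟩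
  set X := min (N : ℝ) (phaseSize c lam N)
  have hN : X ≤ N := min_le_left _ _
  obtain hX | hX := le_or_gt X A
  · have hpow : 1 ≤ A * X ^ (-κ) := by
      rw [Real.rpow_neg hX0.le, ← div_eq_mul_inv, one_le_div (by positivity)]
      exact (Real.rpow_le_rpow hX0.le hX hκ.le).trans (Real.rpow_le_self_of_one_le hA hκ1)
    calc _ ≤ (#(Ioc (N / 2) N) : ℝ) := norm_sum_eC_le _ _
      _ ≤ N := by rw [Nat.card_Ioc]; exact_mod_cast Nat.sub_le _ _
      _ ≤ N * (A * X ^ (-κ)) := le_mul_of_one_le_right N.cast_nonneg hpow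
      _ = A * N * X ^ (-κ) := by ring
      _ ≤ _ := by gcongr; exact le_max_left _ _
  · obtain ⟨L, hL, hAL, hNAL⟩ := exists_block_length hA (hX.le.trans hN)
    have hN0 : 0 < N := by exact_mod_cast hX0.trans_le hN
    have hcover : N - N / 2 ≤ ⌈2 * A⌉₊ * L := by
      rw [← Nat.cast_le (α := ℝ), Nat.cast_mul]
      calc ((N - N / 2 : ℕ) : ℝ) ≤ N := by exact_mod_cast Nat.sub_le _ _
        _ ≤ ⌈2 * A⌉₊ * L := hNAL.trans (by gcongr; exact Nat.le_ceil _)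
    rw [← Ico_add_one_add_one_eq_Ioc, sum_Ico_eq_sum_range, Nat.add_sub_add_right]
    calc _ ≤ ⌈2 * A⌉₊ * (C * N * X ^ (-κ)) := by
          refine norm_sum_range_le_of_blocks (fun a M hML haM => ?_) _ le_rfl hcover
          simpa only [add_assoc] using hblock N (N / 2 + 1 + a) lam M L hL hAL hNAL hML
            (by rw [div_le_iff₀ two_pos]; norm_cast; lia) (by lia) hlam (hA.trans hX.le)
      _ = ⌈2 * A⌉₊ * C * N * X ^ (-κ) := by ring
      _ ≤ _ := by gcongr; exact le_max_right _ _

end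

/-! ### Removing the integer parts -/

/-- The Fejér kernel `F_K(y) = K⁻¹ |∑_{a < K} e(a y)|²`. -/
def fejer (K : ℕ) (y : ℝ) : ℝ := ‖∑ a ∈ range K, eC (a * y)‖ ^ 2 / K

lemma fejer_nonneg (K : ℕ) (y : ℝ) : 0 ≤ fejer K y := by unfold fejer; positivity

lemma fejer_eq (K : ℕ) (y : ℝ) :
    (fejer K y : ℂ) = (K : ℂ)⁻¹ * ∑ p ∈ range K ×ˢ range K, eC (((p.1 - p.2 : ℤ) : ℝ) * y) := by
  rw [fejer, Complex.ofReal_div, Complex.ofReal_pow, ← Complex.mul_conj', map_sum, sum_mul_sum,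
    ← sum_product', div_eq_inv_mul, Complex.ofReal_natCast]
  refine congrArg _ (sum_congr rfl fun p _ => ?_)
  rw [eC_mul_conj, ← sub_mul]
  push_cast
  rfl

lemma fejer_sub_intCast (K : ℕ) (y : ℝ) (k : ℤ) : fejer K (y - k) = fejer K y := by
  have h : ∀ a : ℕ, eC (a * (y - k)) = eC (a * y) := fun a => by
    rw [← eC_add_intCast (a * y) (-(a * k))]
    push_cast
    ring_nf
  simp only [fejer, h]

lemma sum_eC_mul_div {K : ℕ} {d : ℤ} (hd : |d| < K) :
    ∑ r ∈ range K, eC (d * (r / K)) = if d = 0 then (K : ℂ) else 0 := by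
  split_ifs with h
  · simp [h, eC_zero]
  have hK : (K : ℝ) ≠ 0 := by exact_mod_cast ((abs_nonneg d).trans_lt hd).ne'
  have hpow : ∀ r : ℕ, eC (d * (r / K)) = eC (d / K) ^ r := fun r => by
    rw [← eC_natCast_mul]; ring_nf
  have hne : eC (d / K) ≠ 1 := fun h1 => by
    obtain ⟨k, hk⟩ := eC_eq_one_iff.1 h1
    rw [div_eq_iff hK] at hk
    exact h (Int.eq_zero_of_abs_lt_dvd ⟨k, by rw [mul_comm]; exact_mod_cast hk⟩ hd)
  simp only [hpow]
  rw [geom_sum_eq hne, ← eC_natCast_mul, mul_div_cancel₀ _ hK, eC_intCast, sub_self, zero_div]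

lemma abs_sub_lt_of_mem_range_product {K : ℕ} {p : ℕ × ℕ} (hp : p ∈ range K ×ˢ range K) :
    |(p.1 - p.2 : ℤ)| < K := by
  rw [mem_product, mem_range, mem_range] at hp
  exact abs_lt.2 ⟨by lia, by lia⟩

lemma sum_range_product_ite (K : ℕ) {M : Type*} [Semiring M] (x : M) :
    ∑ p ∈ range K ×ˢ range K, (if (p.1 - p.2 : ℤ) = 0 then x else 0) = K * x := by
  simp only [sub_eq_zero, Nat.cast_inj, sum_product, sum_ite_eq, sum_ite_mem, inter_self,
    sum_const, card_range, nsmul_eq_mul]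

lemma sum_fejer_sub_div {K : ℕ} (hK : 0 < K) (x : ℝ) :
    ∑ r ∈ range K, fejer K (x - r / K) = K := by
  have hK0 : (K : ℂ) ≠ 0 := Nat.cast_ne_zero.2 hK.ne'
  have hp : ∀ p ∈ range K ×ˢ range K, ∑ r ∈ range K, eC (((p.1 - p.2 : ℤ) : ℝ) * (x - r / K)) =
      if (p.1 - p.2 : ℤ) = 0 then (K : ℂ) else 0 := fun p hp => by
    have h : ∀ r : ℕ, eC (((p.1 - p.2 : ℤ) : ℝ) * (x - r / K)) =
        eC (((p.1 - p.2 : ℤ) : ℝ) * x) * eC ((-(p.1 - p.2 : ℤ) : ℤ) * (r / K)) := fun r => by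
      rw [← eC_add]; push_cast; ring_nf
    simp only [h]
    rw [← mul_sum, sum_eC_mul_div (by rw [abs_neg]; exact abs_sub_lt_of_mem_range_product hp)]
    split_ifs with h0 h1 h1
    · rw [h1, Int.cast_zero, zero_mul, eC_zero, one_mul]
    · exact absurd (neg_eq_zero.1 h0) h1
    · exact absurd (neg_eq_zero.2 h1) h0
    · exact mul_zero _
  rw [← Complex.ofReal_inj, Complex.ofReal_sum, Complex.ofReal_natCast]
  simp only [fejer_eq]
  rw [← mul_sum, sum_comm, sum_congr rfl hp, sum_range_product_ite, inv_mul_cancel_left₀ hK0]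

lemma fejer_le {K : ℕ} {y η : ℝ} (hη : 0 < η) (hy : η ≤ |y - round y|) :
    fejer K y ≤ 1 / (4 * η ^ 2 * K) := by
  have h := (mul_le_mul_of_nonneg_left hy zero_le_four).trans (four_mul_abs_sub_round_le y)
  have hne : eC y ≠ 1 := fun h0 => by
    rw [h0, sub_self, norm_zero] at h
    linarith
  have hs : ‖∑ a ∈ range K, eC (a * y)‖ ≤ 1 / (2 * η) := by
    simp only [eC_natCast_mul]
    rw [geom_sum_eq hne, norm_div]
    have h2 : ‖eC y ^ K - 1‖ ≤ 2 := by
      refine (norm_sub_le _ _).trans_eq ?_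
      rw [norm_pow, norm_eC, one_pow, norm_one, one_add_one_eq_two]
    calc ‖eC y ^ K - 1‖ / ‖eC y - 1‖ ≤ 2 / (4 * η) := by gcongr
      _ = 1 / (2 * η) := by field_simp; norm_num
  calc fejer K y ≤ (1 / (2 * η)) ^ 2 / K := by unfold fejer; gcongr
    _ = 1 / (4 * η ^ 2 * K) := by ring

lemma le_fejer {Q : ℕ} (hQ : 0 < Q) {y : ℝ} (hy : |y - round y| ≤ 1 / (16 * Q)) :
    (Q : ℝ) / 4 ≤ fejer Q y := by
  have : (0 : ℝ) < Q := Nat.cast_pos.2 hQ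
  rw [← fejer_sub_intCast Q y (round y)]
  set z := y - round y
  have hterm : ∀ a ∈ range Q, ‖1 - eC (a * z)‖ ≤ 1 / 2 := fun a ha => by
    rw [← eC_zero]
    calc _ ≤ 2 * Real.pi * |0 - a * z| := norm_eC_sub_eC_le _ _
      _ = 2 * Real.pi * (a * |z|) := by rw [zero_sub, abs_neg, abs_mul, Nat.abs_cast]
      _ ≤ 2 * 4 * (Q * (1 / (16 * Q))) := by
        gcongr
        exacts [Real.pi_le_four, (mem_range.1 ha).le]
      _ = 1 / 2 := by field_simp; norm_num
  have hdist : ‖(Q : ℂ) - ∑ a ∈ range Q, eC (a * z)‖ ≤ Q / 2 :=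
    calc _ = ‖∑ a ∈ range Q, (1 - eC (a * z))‖ := by simp
      _ ≤ ∑ a ∈ range Q, (1 / 2 : ℝ) := norm_sum_le_of_le _ hterm
      _ = Q / 2 := by rw [sum_const, card_range, nsmul_eq_mul, mul_one_div]
  have hlow : (Q : ℝ) / 2 ≤ ‖∑ a ∈ range Q, eC (a * z)‖ := by
    have := norm_sub_norm_le (Q : ℂ) (∑ a ∈ range Q, eC (a * z))
    rw [Complex.norm_natCast] at this
    linarith
  calc (Q : ℝ) / 4 = (Q / 2) ^ 2 / Q := by field_simp; norm_num
    _ ≤ fejer Q z := by unfold fejer; gcongr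

lemma sum_fejer_le {α : Type*} {Q : ℕ} (hQ : 0 < Q) (s : Finset α) (x : α → ℝ) {B : ℝ}
    (hB : 0 ≤ B) (h : ∀ j : ℤ, j ≠ 0 → |j| < Q → ‖∑ n ∈ s, eC (j * x n)‖ ≤ B) :
    ∑ n ∈ s, fejer Q (x n) ≤ #s + Q * B := by
  have hQ0 : (Q : ℝ) ≠ 0 := Nat.cast_ne_zero.2 hQ.ne'
  have hp : ∀ p ∈ range Q ×ˢ range Q, ‖∑ n ∈ s, eC (((p.1 - p.2 : ℤ) : ℝ) * x n)‖ ≤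
      (if (p.1 - p.2 : ℤ) = 0 then (#s : ℝ) else 0) + B := fun p hp => by
    split_ifs with h0
    · exact (norm_sum_eC_le _ _).trans (le_add_of_nonneg_right hB)
    · rw [zero_add]
      exact h _ h0 (abs_sub_lt_of_mem_range_product hp)
  have hnorm : ∑ n ∈ s, fejer Q (x n) = ‖((∑ n ∈ s, fejer Q (x n) : ℝ) : ℂ)‖ := by
    rw [Complex.norm_real, Real.norm_of_nonneg (sum_nonneg fun n _ => fejer_nonneg _ _)]
  rw [hnorm, Complex.ofReal_sum]
  simp only [fejer_eq]
  rw [← mul_sum, sum_comm, norm_mul, norm_inv, Complex.norm_natCast]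
  calc _ ≤ (Q : ℝ)⁻¹ * ∑ p ∈ range Q ×ˢ range Q,
        ((if (p.1 - p.2 : ℤ) = 0 then (#s : ℝ) else 0) + B) := by
        gcongr
        exact norm_sum_le_of_le _ hp
    _ = (Q : ℝ)⁻¹ * (Q * #s + Q * Q * B) := by
      rw [sum_add_distrib, sum_range_product_ite, sum_const, card_product, card_range,
        nsmul_eq_mul, Nat.cast_mul]
    _ = #s + Q * B := by field_simp

/-- A trigonometric polynomial approximating `x ↦ e(ξ {x})`: the convolution with the Fejér kernel
`F_K`, discretised to the sample points `r / K`. -/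
def fejerSample (K : ℕ) (ξ x : ℝ) : ℂ :=
  (K : ℂ)⁻¹ * ∑ r ∈ range K, eC (ξ * (r / K)) * fejer K (x - r / K)

/-- The coefficients of the trigonometric polynomial `fejerSample`; the pair `p` contributes to the
frequency `p.1 - p.2`. -/
def fejerCoeff (K : ℕ) (ξ : ℝ) (p : ℕ × ℕ) : ℂ :=
  (K : ℂ)⁻¹ * ((K : ℂ)⁻¹ * ∑ r ∈ range K, eC ((ξ - (p.1 - p.2 : ℤ)) * (r / K)))

lemma fejerSample_eq (K : ℕ) (ξ x : ℝ) : fejerSample K ξ x =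
    ∑ p ∈ range K ×ˢ range K, fejerCoeff K ξ p * eC (((p.1 - p.2 : ℤ) : ℝ) * x) := by
  simp only [fejerSample, fejerCoeff, fejer_eq, mul_sum, sum_mul]
  rw [sum_comm]
  refine sum_congr rfl fun p _ => sum_congr rfl fun r _ => ?_
  have h : eC (ξ * (r / K)) * eC (((p.1 - p.2 : ℤ) : ℝ) * (x - r / K)) =
      eC ((ξ - (p.1 - p.2 : ℤ)) * (r / K)) * eC (((p.1 - p.2 : ℤ) : ℝ) * x) := by
    rw [← eC_add, ← eC_add]
    ring_nf
  linear_combination (K : ℂ)⁻¹ * (K : ℂ)⁻¹ * h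

lemma sum_norm_fejerCoeff_le (K : ℕ) (ξ : ℝ) :
    ∑ p ∈ range K ×ˢ range K, ‖fejerCoeff K ξ p‖ ≤ K := by
  have h : ∀ p, ‖fejerCoeff K ξ p‖ ≤ (K : ℝ)⁻¹ := fun p => by
    rw [fejerCoeff, norm_mul, norm_mul, norm_inv, Complex.norm_natCast]
    refine mul_le_of_le_one_right (by positivity) ?_
    calc _ ≤ (K : ℝ)⁻¹ * K := by
          gcongr
          exact (norm_sum_eC_le _ _).trans_eq (by rw [card_range])
      _ ≤ 1 := inv_mul_le_one
  calc _ ≤ ∑ _p ∈ range K ×ˢ range K, (K : ℝ)⁻¹ := sum_le_sum fun p _ => h p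
    _ = K * K * (K : ℝ)⁻¹ := by
      rw [sum_const, card_product, card_range, nsmul_eq_mul, Nat.cast_mul]
    _ = K := by rw [mul_self_mul_inv]

lemma norm_sub_fejerSample_le_sum {K : ℕ} (hK : 0 < K) (ξ x : ℝ) (w : ℂ) :
    ‖w - fejerSample K ξ x‖ ≤
      (K : ℝ)⁻¹ * ∑ r ∈ range K, ‖w - eC (ξ * (r / K))‖ * fejer K (x - r / K) := by
  have hK0 : (K : ℂ) ≠ 0 := Nat.cast_ne_zero.2 hK.ne'
  have hone : ∑ r ∈ range K, (fejer K (x - r / K) : ℂ) = K := by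
    exact_mod_cast congrArg Complex.ofReal (sum_fejer_sub_div hK x)
  have hw : w - fejerSample K ξ x =
      (K : ℂ)⁻¹ * ∑ r ∈ range K, (w - eC (ξ * (r / K))) * fejer K (x - r / K) := by
    simp only [fejerSample, sub_mul]
    rw [sum_sub_distrib, ← mul_sum, hone, mul_sub, mul_comm w, inv_mul_cancel_left₀ hK0]
  rw [hw, norm_mul, norm_inv, Complex.norm_natCast]
  gcongr
  refine norm_sum_le_of_le _ fun r _ => ?_
  rw [norm_mul, Complex.norm_real, Real.norm_of_nonneg (fejer_nonneg _ _)]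

lemma norm_fejerSample_le {K : ℕ} (hK : 0 < K) (ξ x : ℝ) : ‖fejerSample K ξ x‖ ≤ 1 := by
  have h := norm_sub_fejerSample_le_sum hK ξ x 0
  simp only [zero_sub, norm_neg, norm_eC, one_mul] at h
  rwa [sum_fejer_sub_div hK, inv_mul_cancel₀ (Nat.cast_ne_zero.2 hK.ne')] at h

lemma abs_fract_sub_lt {x y η : ℝ} (hy : y ∈ Set.Ico (0 : ℝ) 1)
    (hx : Int.fract x ∈ Set.Icc η (1 - η)) (h : |x - y - round (x - y)| < η) :
    |Int.fract x - y| < η := by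
  have heq : x - y - round (x - y) = Int.fract x - y - (round (x - y) - ⌊x⌋ : ℤ) := by
    rw [← Int.self_sub_floor]; push_cast; ring
  rw [heq] at h
  have hk : round (x - y) - ⌊x⌋ = 0 := by
    rw [abs_lt] at h
    have hlt : ((round (x - y) - ⌊x⌋ : ℤ) : ℝ) < 1 := by linarith [hx.2, hy.1]
    have hgt : (-1 : ℝ) < (round (x - y) - ⌊x⌋ : ℤ) := by linarith [hx.1, hy.2]
    norm_cast at hlt hgt
    lia
  rwa [hk, Int.cast_zero, sub_zero] at h

lemma norm_sub_fejerSample_le_of_fract_mem {K : ℕ} (hK : 0 < K) {ξ x η : ℝ} (hξ : |ξ| ≤ 1 / 2)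
    (hη : 0 < η) (hx : Int.fract x ∈ Set.Icc η (1 - η)) :
    ‖eC (ξ * Int.fract x) - fejerSample K ξ x‖ ≤ 4 * η + 1 / (2 * η ^ 2 * K) := by
  have hK0 : (0 : ℝ) < K := Nat.cast_pos.2 hK
  have hterm : ∀ r ∈ range K, ‖eC (ξ * Int.fract x) - eC (ξ * (r / K))‖ * fejer K (x - r / K) ≤
      4 * η * fejer K (x - r / K) + 1 / (2 * η ^ 2 * K) := fun r hr => by
    have hF := fejer_nonneg K (x - r / K)
    obtain hfar | hnear := le_or_gt η |x - r / K - round (x - r / K)|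
    · calc _ ≤ 2 * (1 / (4 * η ^ 2 * K)) := by
            refine mul_le_mul ?_ (fejer_le hη hfar) hF zero_le_two
            exact (norm_sub_le _ _).trans_eq (by rw [norm_eC, norm_eC, one_add_one_eq_two])
        _ = 1 / (2 * η ^ 2 * K) := by ring
        _ ≤ _ := le_add_of_nonneg_left (by positivity)
    · have hmem : (r / K : ℝ) ∈ Set.Ico 0 1 :=
        ⟨by positivity, (div_lt_one hK0).2 (by exact_mod_cast mem_range.1 hr)⟩
      calc _ ≤ 2 * Real.pi * |ξ * Int.fract x - ξ * (r / K)| * fejer K (x - r / K) := by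
            gcongr; exact norm_eC_sub_eC_le _ _
        _ = 2 * Real.pi * (|ξ| * |Int.fract x - r / K|) * fejer K (x - r / K) := by
            rw [← mul_sub, abs_mul]
        _ ≤ 2 * 4 * (1 / 2 * η) * fejer K (x - r / K) := by
            gcongr
            exacts [Real.pi_le_four, (abs_fract_sub_lt hmem hx hnear).le]
        _ = 4 * η * fejer K (x - r / K) := by ring
        _ ≤ _ := le_add_of_nonneg_right (by positivity)
  calc _ ≤ _ := norm_sub_fejerSample_le_sum hK ξ x _
    _ ≤ (K : ℝ)⁻¹ * ∑ r ∈ range K, (4 * η * fejer K (x - r / K) + 1 / (2 * η ^ 2 * K)) := by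
      gcongr with r hr; exact hterm r hr
    _ = 4 * η + 1 / (2 * η ^ 2 * K) := by
      rw [sum_add_distrib, ← mul_sum, sum_fejer_sub_div hK, sum_const, card_range, nsmul_eq_mul]
      field_simp

lemma norm_sub_fejerSample_le_of_fract_notMem {Q K : ℕ} (hQ : 0 < Q) (hK : 0 < K) (ξ : ℝ) {x : ℝ}
    (hx : Int.fract x ∉ Set.Icc (1 / (16 * Q) : ℝ) (1 - 1 / (16 * Q))) :
    ‖eC (ξ * Int.fract x) - fejerSample K ξ x‖ ≤ 8 / Q * fejer Q x := by
  have hround : |x - round x| ≤ 1 / (16 * Q) := by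
    by_contra! h
    refine hx ⟨?_, ?_⟩
    · have := h.trans_le (round_le x ⌊x⌋)
      rw [Int.self_sub_floor, Int.abs_fract] at this
      exact this.le
    · have := h.trans_le (round_le x (⌊x⌋ + 1))
      rw [Int.cast_add, Int.cast_one, ← sub_sub, Int.self_sub_floor,
        abs_of_neg (by linarith [Int.fract_lt_one x])] at this
      linarith
  calc _ ≤ (2 : ℝ) := by
        refine (norm_sub_le _ _).trans ?_
        rw [norm_eC]
        linarith [norm_fejerSample_le hK ξ x]
    _ = 8 / Q * (Q / 4) := by field_simp; norm_num
    _ ≤ 8 / Q * fejer Q x := by gcongr; exact le_fejer hQ hround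

lemma norm_sub_fejerSample_le {Q : ℕ} (hQ : 0 < Q) {ξ : ℝ} (hξ : |ξ| ≤ 1 / 2) (x : ℝ) :
    ‖eC (ξ * Int.fract x) - fejerSample (Q ^ 3) ξ x‖ ≤ 129 / Q + 8 / Q * fejer Q x := by
  have hK : 0 < Q ^ 3 := pow_pos hQ 3
  have hF := fejer_nonneg Q x
  by_cases hx : Int.fract x ∈ Set.Icc (1 / (16 * Q) : ℝ) (1 - 1 / (16 * Q))
  · calc _ ≤ _ := norm_sub_fejerSample_le_of_fract_mem hK hξ (by positivity) hx
      _ = (1 / 4 + 128) / Q := by push_cast; field_simp; norm_num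
      _ ≤ 129 / Q := by gcongr; norm_num
      _ ≤ _ := le_add_of_nonneg_right (by positivity)
  · exact (norm_sub_fejerSample_le_of_fract_notMem hQ hK ξ hx).trans
      (le_add_of_nonneg_left (by positivity))

lemma norm_prod_sub_prod_le {ι A : Type*} [NormedCommRing A] [NormOneClass A] (s : Finset ι)
    {f g : ι → A} (hf : ∀ i ∈ s, ‖f i‖ ≤ 1) (hg : ∀ i ∈ s, ‖g i‖ ≤ 1) :
    ‖∏ i ∈ s, f i - ∏ i ∈ s, g i‖ ≤ ∑ i ∈ s, ‖f i - g i‖ := by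
  classical
  induction s using Finset.induction_on with
  | empty => simp
  | insert a s ha ih =>
    rw [prod_insert ha, prod_insert ha, sum_insert ha]
    have hprod : ‖∏ i ∈ s, f i‖ ≤ 1 := (Finset.norm_prod_le _ _).trans
      (prod_le_one (fun _ _ => norm_nonneg _) fun i hi => hf i (mem_insert_of_mem hi))
    have hih := ih (fun i hi => hf i (mem_insert_of_mem hi)) fun i hi => hg i (mem_insert_of_mem hi)
    calc _ = ‖(f a - g a) * ∏ i ∈ s, f i + g a * (∏ i ∈ s, f i - ∏ i ∈ s, g i)‖ := by ring_nf
      _ ≤ ‖f a - g a‖ * ‖∏ i ∈ s, f i‖ + ‖g a‖ * ‖∏ i ∈ s, f i - ∏ i ∈ s, g i‖ :=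
        (norm_add_le _ _).trans (add_le_add (norm_mul_le _ _) (norm_mul_le _ _))
      _ ≤ ‖f a - g a‖ * 1 + 1 * ∑ i ∈ s, ‖f i - g i‖ := by
        gcongr; exact hg a (mem_insert_self a s)
      _ = _ := by rw [mul_one, one_mul]

section

variable {α ι : Type*} [Fintype ι] (s : Finset α) (x : ι → α → ℝ) (ξ : ι → ℝ)

lemma norm_sum_prod_fejerSample_le (K : ℕ) {B : ℝ} (hB : 0 ≤ B)
    (h : ∀ j : ι → ℤ, (∀ i, |j i| < K) → ‖∑ n ∈ s, eC (∑ i, (j i - ξ i) * x i n)‖ ≤ B) :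
    ‖∑ n ∈ s, ∏ i, eC (-(ξ i * x i n)) * fejerSample K (ξ i) (x i n)‖ ≤
      (K : ℝ) ^ Fintype.card ι * B := by
  classical
  set T := Fintype.piFinset fun _ : ι => range K ×ˢ range K
  have hexpand : ∀ n, ∏ i, eC (-(ξ i * x i n)) * fejerSample K (ξ i) (x i n) =
      ∑ P ∈ T, (∏ i, fejerCoeff K (ξ i) (P i)) *
        eC (∑ i, (((P i).1 - (P i).2 : ℤ) - ξ i) * x i n) := fun n => by
    simp only [fejerSample_eq, mul_sum]
    rw [prod_univ_sum]
    refine sum_congr rfl fun P _ => ?_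
    rw [eC_sum, ← prod_mul_distrib]
    refine prod_congr rfl fun i _ => ?_
    rw [mul_left_comm, ← eC_add]
    ring_nf
  have hterm : ∀ P ∈ T, ‖∑ n ∈ s, (∏ i, fejerCoeff K (ξ i) (P i)) *
      eC (∑ i, (((P i).1 - (P i).2 : ℤ) - ξ i) * x i n)‖ ≤
        (∏ i, ‖fejerCoeff K (ξ i) (P i)‖) * B := fun P hP => by
    rw [← mul_sum, norm_mul, norm_prod]
    gcongr
    exact h _ fun i => abs_sub_lt_of_mem_range_product (Fintype.mem_piFinset.1 hP i)
  simp only [hexpand]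
  rw [sum_comm]
  calc _ ≤ ∑ P ∈ T, (∏ i, ‖fejerCoeff K (ξ i) (P i)‖) * B := norm_sum_le_of_le _ hterm
    _ = (∏ i, ∑ p ∈ range K ×ˢ range K, ‖fejerCoeff K (ξ i) p‖) * B := by
      rw [← sum_mul, prod_univ_sum]
    _ ≤ (∏ _i : ι, (K : ℝ)) * B := by
      gcongr with i
      exact sum_norm_fejerCoeff_le K (ξ i)
    _ = (K : ℝ) ^ Fintype.card ι * B := by rw [prod_const, card_univ]

lemma eC_neg_sum_mul_floor (n : α) : eC (-∑ i, ξ i * ⌊x i n⌋) =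
    ∏ i, eC (-(ξ i * x i n)) * eC (ξ i * Int.fract (x i n)) := by
  rw [← sum_neg_distrib, eC_sum]
  refine prod_congr rfl fun i _ => ?_
  rw [← eC_add, ← Int.self_sub_floor]
  ring_nf

lemma norm_eC_floor_sub_prod_fejerSample_le {Q : ℕ} (hQ : 0 < Q) (hξ : ∀ i, |ξ i| ≤ 1 / 2) (n : α) :
    ‖eC (-∑ i, ξ i * ⌊x i n⌋) - ∏ i, eC (-(ξ i * x i n)) * fejerSample (Q ^ 3) (ξ i) (x i n)‖ ≤
      ∑ i, (129 / Q + 8 / Q * fejer Q (x i n)) := by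
  rw [eC_neg_sum_mul_floor]
  refine (norm_prod_sub_prod_le _ (fun i _ => ?_) fun i _ => ?_).trans (sum_le_sum fun i _ => ?_)
  · rw [norm_mul, norm_eC, norm_eC, one_mul]
  · rw [norm_mul, norm_eC, one_mul]
    exact norm_fejerSample_le (pow_pos hQ 3) _ _
  · rw [← mul_sub, norm_mul, norm_eC, one_mul]
    exact norm_sub_fejerSample_le hQ (hξ i) _

theorem norm_sum_eC_floor_le {Q : ℕ} (hQ : 0 < Q) (hξ : ∀ i, |ξ i| ≤ 1 / 2) {B : ℝ} (hB : 0 ≤ B)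
    (hone : ∀ i, ∀ j : ℤ, j ≠ 0 → |j| < Q → ‖∑ n ∈ s, eC (j * x i n)‖ ≤ B)
    (hall : ∀ j : ι → ℤ, (∀ i, |j i| < (Q ^ 3 : ℕ)) →
      ‖∑ n ∈ s, eC (∑ i, (j i - ξ i) * x i n)‖ ≤ B) :
    ‖∑ n ∈ s, eC (-∑ i, ξ i * ⌊x i n⌋)‖ ≤ ((Q ^ 3 : ℕ) : ℝ) ^ Fintype.card ι * B +
      Fintype.card ι * (137 / Q * #s + 8 * B) := by
  have hQ0 : (Q : ℝ) ≠ 0 := Nat.cast_ne_zero.2 hQ.ne'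
  have hmain := norm_sum_prod_fejerSample_le s x ξ (Q ^ 3) hB hall
  set P : α → ℂ := fun n => ∏ i, eC (-(ξ i * x i n)) * fejerSample (Q ^ 3) (ξ i) (x i n)
  have herr : ∀ i, ∑ n ∈ s, (129 / Q + 8 / Q * fejer Q (x i n)) ≤ 137 / Q * #s + 8 * B := fun i =>
    calc _ = #s * (129 / Q) + 8 / Q * ∑ n ∈ s, fejer Q (x i n) := by
          rw [sum_add_distrib, ← mul_sum, sum_const, nsmul_eq_mul]
      _ ≤ #s * (129 / Q) + 8 / Q * (#s + Q * B) := by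
          gcongr; exact sum_fejer_le hQ s (x i) hB (hone i)
      _ = 137 / Q * #s + 8 * B := by field_simp; ring
  calc _ = ‖∑ n ∈ s, P n + ∑ n ∈ s, (eC (-∑ i, ξ i * ⌊x i n⌋) - P n)‖ := by
        rw [sum_sub_distrib, add_sub_cancel]
    _ ≤ ‖∑ n ∈ s, P n‖ + ∑ n ∈ s, ∑ i, (129 / Q + 8 / Q * fejer Q (x i n)) :=
      (norm_add_le _ _).trans (add_le_add_right (norm_sum_le_of_le _ fun n _ =>
        norm_eC_floor_sub_prod_fejerSample_le x ξ hQ hξ n) _)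
    _ ≤ _ + Fintype.card ι * (137 / Q * #s + 8 * B) := by
      gcongr
      rw [sum_comm, ← nsmul_eq_mul]
      exact sum_le_card_nsmul _ _ _ fun i _ => herr i

end

/-! ### The multiplier of the averages -/

section

variable {m : ℕ} {c : Fin m → ℝ} {N X γ : ℝ}

lemma abs_mul_rpow_le_phaseSize (c lam : Fin m → ℝ) (hN : 0 ≤ N) (i : Fin m) :
    |lam i| * N ^ c i ≤ phaseSize c lam N := by
  have := norm_le_pi_norm (fun i => lam i * N ^ c i) i
  rwa [norm_mul, Real.norm_of_nonneg (Real.rpow_nonneg hN _)] at this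

lemma half_rpow_le_phaseSize {lam : Fin m → ℝ} {i : Fin m} (hX : 1 ≤ X) (hXN : X ≤ N)
    (hγ : 0 ≤ γ) (hγc : γ ≤ c i) (hlam : 1 / 2 ≤ |lam i|) :
    X ^ γ / 2 ≤ phaseSize c lam N := by
  have hX0 : 0 ≤ X := zero_le_one.trans hX
  calc X ^ γ / 2 = 1 / 2 * X ^ γ := by ring
    _ ≤ |lam i| * N ^ c i := by
      gcongr
      exact (Real.rpow_le_rpow hX0 hXN hγ).trans
        (Real.rpow_le_rpow_of_exponent_le (hX.trans hXN) hγc)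
    _ ≤ phaseSize c lam N := abs_mul_rpow_le_phaseSize c lam (hX0.trans hXN) i

lemma half_rpow_le_phaseSize_sub {ξ : Fin m → ℝ} (hX : 1 ≤ X) (hXN : X ≤ N) (hγ : 0 ≤ γ)
    (hγ1 : γ ≤ 1) (hγc : ∀ i, γ ≤ c i) (hξ : ∀ i, |ξ i| ≤ 1 / 2)
    (hbox : ∃ i, X * N ^ (-c i) < |ξ i|) (j : Fin m → ℤ) :
    X ^ γ / 2 ≤ phaseSize c (fun i => j i - ξ i) N := by
  have hN : 0 < N := one_pos.trans_le (hX.trans hXN)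
  by_cases hj : ∀ i, j i = 0
  · obtain ⟨i, hi⟩ := hbox
    rw [Real.rpow_neg hN.le, ← div_eq_mul_inv, div_lt_iff₀ (by positivity)] at hi
    calc X ^ γ / 2 ≤ X ^ γ := half_le_self (by positivity)
      _ ≤ X := Real.rpow_le_self_of_one_le hX hγ1
      _ ≤ |(j i : ℝ) - ξ i| * N ^ c i := by simpa [hj i] using hi.le
      _ ≤ _ := abs_mul_rpow_le_phaseSize c (fun i => (j i : ℝ) - ξ i) hN.le i
  · push Not at hj
    obtain ⟨i, hi⟩ := hj
    refine half_rpow_le_phaseSize hX hXN hγ (hγc i) ?_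
    have hji : (1 : ℝ) ≤ |(j i : ℝ)| := by exact_mod_cast Int.one_le_abs hi
    linarith [abs_sub_abs_le_abs_sub (j i : ℝ) (ξ i), hξ i]

end

lemma exists_norm_sum_phase_le_rpow {m : ℕ} {c : Fin m → ℝ} {γ : ℝ} (hm : 0 < m)
    (hc : Function.Injective c) (hint : ∀ i, ∀ k : ℤ, c i ≠ k) (hγ : 0 < γ) (hγ1 : γ ≤ 1) :
    ∃ C κ : ℝ, 0 < C ∧ 0 < κ ∧ κ ≤ 1 ∧ ∀ (N : ℕ) (X : ℝ) (lam : Fin m → ℝ), 1 ≤ X → X ≤ N →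
      (∀ i, |lam i| ≤ N) → X ^ γ / 2 ≤ phaseSize c lam N →
      ‖∑ n ∈ Ioc (N / 2) N, eC (∑ i, lam i * (n : ℝ) ^ c i)‖ ≤ N * (C * X ^ (-κ)) := by
  obtain ⟨C, κ, hC, hκ, hκ1, hsum⟩ := exists_norm_sum_phase_le hm hc hint
  refine ⟨C * 2, γ * κ, by positivity, by positivity, mul_le_one₀ hγ1 hκ.le hκ1,
    fun N X lam hX hXN hlam hsize => ?_⟩
  have hX0 : 0 < X := one_pos.trans_le hX
  have hXγ : 1 ≤ X ^ γ := Real.one_le_rpow hX hγ.le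
  have hmin : 2⁻¹ * X ^ γ ≤ min (N : ℝ) (phaseSize c lam N) := by
    rw [inv_mul_eq_div]
    exact le_min ((half_le_self (by positivity)).trans
      ((Real.rpow_le_self_of_one_le hX hγ1).trans hXN)) hsize
  have hhalf : 0 < 2⁻¹ * X ^ γ := by positivity
  simp only [← phase_zero]
  calc _ ≤ C * N * min (N : ℝ) (phaseSize c lam N) ^ (-κ) := hsum N lam hlam (hhalf.trans_le hmin)
    _ ≤ C * N * (2⁻¹ * X ^ γ) ^ (-κ) := by
      gcongr C * N * ?_
      exact Real.rpow_le_rpow_of_nonpos hhalf hmin (neg_nonpos.2 hκ.le)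
    _ ≤ C * N * (2⁻¹⁻¹ * (X ^ γ) ^ (-κ)) := by
      gcongr
      exact rpow_neg_mul_le (by norm_num) (by norm_num) hXγ le_rfl hκ1
    _ = N * (C * 2 * X ^ (-(γ * κ))) := by
      rw [inv_inv, ← Real.rpow_mul hX0.le, mul_neg]
      ring

lemma exists_nat_le_rpow {X s : ℝ} (hX : 1 ≤ X) (hs : 0 ≤ s) :
    ∃ Q : ℕ, 0 < Q ∧ (Q : ℝ) ≤ X ^ s ∧ (Q : ℝ)⁻¹ ≤ 2 * X ^ (-s) := by
  have hXs : 1 ≤ X ^ s := Real.one_le_rpow hX hs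
  have hQ : 0 < ⌊X ^ s⌋₊ := Nat.floor_pos.2 hXs
  refine ⟨⌊X ^ s⌋₊, hQ, Nat.floor_le (zero_le_one.trans hXs), ?_⟩
  have hQ1 : (1 : ℝ) ≤ ⌊X ^ s⌋₊ := by exact_mod_cast hQ
  rw [Real.rpow_neg (zero_le_one.trans hX), ← div_eq_mul_inv, inv_eq_one_div,
    div_le_div_iff₀ (by positivity) (by positivity)]
  linarith [Nat.lt_floor_add_one (X ^ s)]

lemma min_rpow_neg_le (N s : ℝ) (l : ℕ) (hN : 0 ≤ N) :
    min N (2 ^ l) ^ (-s) ≤ N ^ (-s) + 2 ^ (-(s * l)) := by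
  obtain h | h := min_choice N (2 ^ l)
  · rw [h]
    exact le_add_of_nonneg_right (by positivity)
  · rw [h, ← Real.rpow_natCast, ← Real.rpow_mul zero_le_two, mul_neg, mul_comm (l : ℝ)]
    exact le_add_of_nonneg_left (by positivity)

/-- The Fourier multiplier
`m_N(ξ) = N⁻¹ ∑_{N/2 < n ≤ N} e(-(ξ₁ ⌊n^{c₁}⌋ + ⋯ + ξ_m ⌊n^{c_m}⌋))` of the averages `Ã_N`. -/
def averageMultiplier {m : ℕ} (c : Fin m → ℝ) (N : ℕ) (ξ : Fin m → ℝ) : ℂ :=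
  (N : ℂ)⁻¹ * ∑ n ∈ Ioc (N / 2) N, eC (-∑ i, ξ i * ⌊(n : ℝ) ^ c i⌋)

lemma pow_mul_add_mul_le {m Q : ℕ} {X A κ s : ℝ} (hX : 1 ≤ X) (hA : 0 ≤ A) (hs : 0 ≤ s)
    (hsκ : s * (3 * m + 1) = κ) (hQ : (Q : ℝ) ≤ X ^ s) (hQ' : (Q : ℝ)⁻¹ ≤ 2 * X ^ (-s)) :
    ((Q ^ 3 : ℕ) : ℝ) ^ m * (A * X ^ (-κ)) + m * (137 * (Q : ℝ)⁻¹ + 8 * (A * X ^ (-κ))) ≤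
      (A + m * (274 + 8 * A)) * X ^ (-s) := by
  have hX0 : 0 < X := one_pos.trans_le hX
  have hpow : ((Q ^ 3 : ℕ) : ℝ) ^ m * X ^ (-κ) ≤ X ^ (-s) := calc
    _ = (Q : ℝ) ^ (3 * m) * X ^ (-κ) := by rw [Nat.cast_pow, ← pow_mul]
    _ ≤ (X ^ s) ^ (3 * m) * X ^ (-κ) := by gcongr
    _ = X ^ (-s) := by
      rw [← Real.rpow_natCast, ← Real.rpow_mul hX0.le, ← Real.rpow_add hX0, ← hsκ]
      push_cast
      ring_nf
  have hκs : X ^ (-κ) ≤ X ^ (-s) := by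
    refine Real.rpow_le_rpow_of_exponent_le hX (neg_le_neg ?_)
    rw [← hsκ]
    exact le_mul_of_one_le_right hs (by linarith [m.cast_nonneg (α := ℝ)])
  calc _ = A * (((Q ^ 3 : ℕ) : ℝ) ^ m * X ^ (-κ)) +
        m * (137 * (Q : ℝ)⁻¹ + 8 * (A * X ^ (-κ))) := by ring
    _ ≤ A * X ^ (-s) + m * (137 * (2 * X ^ (-s)) + 8 * (A * X ^ (-s))) := by gcongr
    _ = _ := by ring

lemma exists_norm_sum_eC_floor_le {m : ℕ} {c : Fin m → ℝ} {γ : ℝ} (hm : 0 < m)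
    (hc : Function.Injective c) (hint : ∀ i, ∀ k : ℤ, c i ≠ k) (hγ : 0 < γ) (hγ1 : γ ≤ 1)
    (hγc : ∀ i, γ ≤ c i) :
    ∃ A κ : ℝ, 0 < A ∧ 0 < κ ∧ κ ≤ 1 ∧ ∀ (N Q : ℕ) (X : ℝ) (ξ : Fin m → ℝ), 1 ≤ X → X ≤ N →
      0 < Q → Q ^ 3 ≤ N → (∀ i, |ξ i| ≤ 1 / 2) → (∃ i, X * (N : ℝ) ^ (-c i) < |ξ i|) →
      ‖∑ n ∈ Ioc (N / 2) N, eC (-∑ i, ξ i * ⌊(n : ℝ) ^ c i⌋)‖ ≤ N * (((Q ^ 3 : ℕ) : ℝ) ^ m *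
        (A * X ^ (-κ)) + m * (137 * (Q : ℝ)⁻¹ + 8 * (A * X ^ (-κ)))) := by
  obtain ⟨A, κ, hA, hκ, hκ1, hsum⟩ := exists_norm_sum_phase_le_rpow hm hc hint hγ hγ1
  refine ⟨A, κ, hA, hκ, hκ1, fun N Q X ξ hX hXN hQ hQN hξ hbox => ?_⟩
  set B := N * (A * X ^ (-κ)) with hB
  have hone : ∀ i, ∀ j : ℤ, j ≠ 0 → |j| < Q →
      ‖∑ n ∈ Ioc (N / 2) N, eC (j * (n : ℝ) ^ c i)‖ ≤ B := fun i j hj hjQ => by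
    have hj1 : (1 : ℝ) ≤ |(j : ℝ)| := by exact_mod_cast Int.one_le_abs hj
    have hjN : |(j : ℝ)| ≤ N := by
      exact_mod_cast hjQ.le.trans (Nat.cast_le.2 ((Nat.le_self_pow three_ne_zero Q).trans hQN))
    have := hsum N X (Pi.single i (j : ℝ)) hX hXN
      (fun k => by rw [Pi.single_apply]; split_ifs; exacts [hjN, by simp])
      (half_rpow_le_phaseSize (i := i) hX hXN hγ.le (hγc i)
        (by rw [Pi.single_eq_same]; linarith))
    simpa [Pi.single_apply] using this
  have hall : ∀ j : Fin m → ℤ, (∀ i, |j i| < (Q ^ 3 : ℕ)) →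
      ‖∑ n ∈ Ioc (N / 2) N, eC (∑ i, (j i - ξ i) * (n : ℝ) ^ c i)‖ ≤ B := fun j hj => by
    refine hsum N X _ hX hXN (fun i => ?_)
      (half_rpow_le_phaseSize_sub hX hXN hγ.le hγ1 hγc hξ hbox j)
    have hjN : |(j i : ℝ)| + 1 ≤ N := by exact_mod_cast (hj i).trans_le (Nat.cast_le.2 hQN)
    linarith [abs_sub (j i : ℝ) (ξ i), hξ i]
  have hB0 : 0 ≤ B := by positivity
  have hcard : (#(Ioc (N / 2) N) : ℝ) ≤ N := by
    rw [Nat.card_Ioc]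
    exact_mod_cast Nat.sub_le _ _
  calc _ ≤ ((Q ^ 3 : ℕ) : ℝ) ^ m * B + m * (137 / Q * #(Ioc (N / 2) N) + 8 * B) := by
        simpa only [Fintype.card_fin] using
          norm_sum_eC_floor_le _ (fun i (n : ℕ) => (n : ℝ) ^ c i) ξ hQ hξ hB0 hone hall
    _ ≤ ((Q ^ 3 : ℕ) : ℝ) ^ m * B + m * (137 / Q * N + 8 * B) := by gcongr
    _ = _ := by rw [hB]; ring

theorem exists_norm_averageMultiplier_le {m : ℕ} {c : Fin m → ℝ} (hm : 0 < m)
    (hpos : ∀ i, 0 < c i) (hc : Function.Injective c) (hint : ∀ i, ∀ k : ℤ, c i ≠ k) :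
    ∃ C κ : ℝ, 0 < C ∧ 0 < κ ∧ ∀ (N : ℕ) (X : ℝ) (ξ : Fin m → ℝ), 1 ≤ X → X ≤ N →
      (∀ i, |ξ i| ≤ 1 / 2) → (∃ i, X * (N : ℝ) ^ (-c i) < |ξ i|) →
      ‖averageMultiplier c N ξ‖ ≤ C * X ^ (-κ) := by
  obtain ⟨γ, hγ, hγ1, hγc⟩ : ∃ γ, 0 < γ ∧ γ ≤ 1 ∧ ∀ i, γ ≤ c i := by
    have : Nonempty (Fin m) := ⟨⟨0, hm⟩⟩
    obtain ⟨i, hi⟩ := Finite.exists_min c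
    exact ⟨min 1 (c i), lt_min one_pos (hpos i), min_le_left _ _,
      fun k => (min_le_right _ _).trans (hi k)⟩
  obtain ⟨A, κ, hA, hκ, hκ1, hsum⟩ := exists_norm_sum_eC_floor_le hm hc hint hγ hγ1 hγc
  set s := κ / (3 * m + 1)
  have hsκ : s * (3 * m + 1) = κ := div_mul_cancel₀ _ (by positivity)
  have hs : 0 < s := by positivity
  have hs3 : s * 3 ≤ 1 := by
    have : s * 1 ≤ s * m := by gcongr; exact_mod_cast hm
    linarith
  refine ⟨A + m * (274 + 8 * A), s, by positivity, hs, fun N X ξ hX hXN hξ hbox => ?_⟩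
  obtain ⟨Q, hQ, hQX, hQX'⟩ := exists_nat_le_rpow hX hs.le
  have hX0 : 0 < X := one_pos.trans_le hX
  have hQN : (Q : ℝ) ^ 3 ≤ N := calc
    (Q : ℝ) ^ 3 ≤ (X ^ s) ^ 3 := by gcongr
    _ = X ^ (s * 3) := by rw [Real.rpow_mul hX0.le]; norm_cast
    _ ≤ N := (Real.rpow_le_self_of_one_le hX hs3).trans hXN
  rw [averageMultiplier, norm_mul, norm_inv, Complex.norm_natCast,
    inv_mul_le_iff₀ (hX0.trans_le hXN)]
  calc _ ≤ _ := hsum N Q X ξ hX hXN hQ (by exact_mod_cast hQN) hξ hbox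
    _ ≤ _ := by gcongr; exact pow_mul_add_mul_le hX hA.le hs.le hsκ hQX hQX'

/-! ### Plancherel -/

section Torus

open UnitAddTorus

/-- The Haar probability measure on `ℝ / ℤ`, the normalisation used in the multivariate Fourier
series library. -/
local instance : MeasureSpace UnitAddCircle := ⟨AddCircle.haarAddCircle⟩

local instance : Measure.IsAddHaarMeasure (volume : Measure UnitAddCircle) :=
  inferInstanceAs (Measure.IsAddHaarMeasure AddCircle.haarAddCircle)

local instance : IsProbabilityMeasure (volume : Measure UnitAddCircle) :=
  inferInstanceAs (IsProbabilityMeasure AddCircle.haarAddCircle)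

section

variable {d : Type*} [Fintype d] {f : (d → ℤ) → ℂ}

/-- The trigonometric series on the torus with coefficients `f`; its value at `-ξ` is the Fourier
transform `f̂(ξ)`. -/
def trigSeries (f : (d → ℤ) → ℂ) (t : UnitAddTorus d) : ℂ := ∑' x, f x * mFourier x t

lemma hasSum_smul_mFourier (hf : Summable f) :
    HasSum (fun x => f x • mFourier x) (∑' x, f x • mFourier x) :=
  (Summable.of_norm (by simpa only [norm_smul, mFourier_norm, mul_one] using hf.norm)).hasSum

lemma hasSum_trigSeries (hf : Summable f) (t : UnitAddTorus d) :
    HasSum (fun x => f x * mFourier x t) (trigSeries f t) :=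
  ((ContinuousMap.evalCLM ℂ t).hasSum (hasSum_smul_mFourier hf)).summable.hasSum

lemma coe_tsum_smul_mFourier (hf : Summable f) :
    ⇑(∑' x, f x • mFourier x) = trigSeries f :=
  funext fun t => ((ContinuousMap.evalCLM ℂ t).hasSum (hasSum_smul_mFourier hf)).unique
    (hasSum_trigSeries hf t)

lemma eLpNorm_trigSeries (hf : Summable f) (hf₂ : Memℓp f 2) :
    eLpNorm (trigSeries f) 2 volume = ‖(⟨f, hf₂⟩ : lp (fun _ : d → ℤ => ℂ) 2)‖ₑ := by
  have hL2 : ContinuousMap.toLp (E := ℂ) 2 volume ℂ (∑' x, f x • mFourier x) =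
      mFourierBasis.repr.symm ⟨f, hf₂⟩ := by
    refine HasSum.unique ?_ (mFourierBasis.hasSum_repr_symm _)
    simpa only [map_smul, coe_mFourierBasis] using
      (ContinuousMap.toLp (E := ℂ) 2 (volume : Measure (UnitAddTorus d)) ℂ).hasSum
        (hasSum_smul_mFourier hf)
  rw [← mFourierBasis.repr.symm.enorm_map, ← hL2, Lp.enorm_def,
    eLpNorm_congr_ae (ContinuousMap.coeFn_toLp volume _), coe_tsum_smul_mFourier hf]

end

section

variable {m : ℕ} {f : (Fin m → ℤ) → ℂ}

lemma lpZ_two_eq_enorm (hf : Memℓp f 2) :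
    lpZ m 2 f = ‖(⟨f, hf⟩ : lp (fun _ : Fin m → ℤ => ℂ) 2)‖ₑ := by
  have h2 : (2 : ℝ≥0∞).toReal = 2 := ENNReal.toReal_ofNat 2
  have hsum : Summable fun x => ‖f x‖ ^ (2 : ℝ) := by
    simpa only [h2] using hf.summable (h2 ▸ two_pos)
  rw [← ofReal_norm, lp.norm_eq_tsum_rpow (h2 ▸ two_pos), h2,
    ← ENNReal.ofReal_rpow_of_nonneg (tsum_nonneg fun _ => by positivity) (by norm_num),
    ENNReal.ofReal_tsum_of_nonneg (fun _ => by positivity) hsum, lpZ, one_div]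
  simp only [← ENNReal.ofReal_rpow_of_nonneg (norm_nonneg _) zero_le_two, ofReal_norm]
  rfl

lemma lpZ_two_eq_eLpNorm (hf : Summable f) : lpZ m 2 f = eLpNorm (trigSeries f) 2 volume := by
  have hf₂ : Memℓp f 2 := by
    refine Memℓp.of_exponent_ge (memℓp_gen ?_) one_le_two
    simpa using hf.norm
  rw [lpZ_two_eq_enorm hf₂, eLpNorm_trigSeries hf hf₂]

lemma exists_abs_le_half_coe_neg_eq (t : UnitAddTorus (Fin m)) :
    ∃ ξ : Fin m → ℝ, (∀ i, |ξ i| ≤ 1 / 2) ∧ (fun i => ((-ξ i : ℝ) : UnitAddCircle)) = t := by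
  have hrep : ∀ s : UnitAddCircle, ∃ x : ℝ, |x| ≤ 1 / 2 ∧ ((-x : ℝ) : UnitAddCircle) = s :=
    fun s => by
      obtain ⟨x, hx, rfl⟩ := (AddCircle.coe_image_Icc_eq (1 : ℝ) (-(1 / 2))).ge (Set.mem_univ s)
      exact ⟨-x, abs_le.2 ⟨by linarith [hx.2], by linarith [hx.1]⟩, by rw [neg_neg]⟩
  choose ξ hξ hξt using fun i => hrep (t i)
  exact ⟨ξ, hξ, funext hξt⟩

lemma mFourier_coe_neg (x : Fin m → ℤ) (ξ : Fin m → ℝ) :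
    mFourier x (fun i => ((-ξ i : ℝ) : UnitAddCircle)) = eC (-∑ i, x i * ξ i) := by
  rw [← sum_neg_distrib, eC_sum]
  simp only [mFourier, ContinuousMap.coe_mk, fourier_coe_apply, eC]
  refine prod_congr rfl fun i _ => ?_
  push_cast
  ring_nf

lemma hasSum_trigSeries_sub (hf : Summable f) (v : Fin m → ℤ) (t : UnitAddTorus (Fin m)) :
    HasSum (fun x => f (x - v) * mFourier x t) (mFourier v t * trigSeries f t) := by
  have h := (Equiv.subRight v).hasSum_iff.2 ((hasSum_trigSeries hf t).mul_left (mFourier v t))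
  refine h.congr_fun fun x => ?_
  rw [Function.comp_apply, Equiv.subRight_apply, mul_left_comm, ← mFourier_add, add_sub_cancel]

lemma Atil_eq (c : Fin m → ℝ) (N : ℕ) (f : (Fin m → ℤ) → ℂ) : Atil m c N f = fun x =>
    (N : ℂ)⁻¹ * ∑ n ∈ Ioc (N / 2) N, f (x - fun i => ⌊(n : ℝ) ^ c i⌋) := by
  funext x
  rw [Atil, ← sum_filter]
  congr 2
  ext n
  simp only [mem_filter, mem_Icc, mem_Ioc]
  lia

lemma summable_Atil (c : Fin m → ℝ) (N : ℕ) (hf : Summable f) : Summable (Atil m c N f) := by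
  rw [Atil_eq]
  exact (summable_sum fun n _ => (Equiv.subRight _).summable_iff.2 hf).mul_left _

lemma trigSeries_Atil (c : Fin m → ℝ) (N : ℕ) (hf : Summable f) (ξ : Fin m → ℝ) :
    trigSeries (Atil m c N f) (fun i => ((-ξ i : ℝ) : UnitAddCircle)) =
      averageMultiplier c N ξ * trigSeries f (fun i => ((-ξ i : ℝ) : UnitAddCircle)) := by
  set t : UnitAddTorus (Fin m) := fun i => ((-ξ i : ℝ) : UnitAddCircle)
  have hmult : averageMultiplier c N ξ =
      (N : ℂ)⁻¹ * ∑ n ∈ Ioc (N / 2) N, mFourier (fun i => ⌊(n : ℝ) ^ c i⌋) t := by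
    simp only [averageMultiplier, t, mFourier_coe_neg, mul_comm]
  have hsum := (hasSum_sum fun n (_ : n ∈ Ioc (N / 2) N) =>
    hasSum_trigSeries_sub hf (fun i => ⌊(n : ℝ) ^ c i⌋) t).mul_left (N : ℂ)⁻¹
  rw [hmult, mul_assoc, sum_mul, ← hsum.tsum_eq, Atil_eq]
  simp only [trigSeries, sum_mul, mul_assoc]

end

end Torus

/-- single-scale minor arc estimate, Theorem 4.7 of the
paper: for non-integer `0 < c₁ < ⋯ < c_m` there are `C, κ > 0` such that for
all `N ≥ 1` and `l ∈ ℕ`: if `f ∈ ℓ²(ℤ^m)` and the Fourier transform of `f`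
vanishes on the box `∏_i [−2^l N^{−c_i}, 2^l N^{−c_i}]` (viewed in
`𝕋^m = (ℝ/ℤ)^m`; here vanishing at `ξ` is expressed as
`HasSum (fun x => f x e(−x·ξ)) 0`), then
`‖Ã_N f‖_{ℓ²} ≤ C (N^{−κ} + 2^{−κl}) ‖f‖_{ℓ²}`. -/
theorem stmt13 {m : ℕ} (hm : 0 < m) (c : Fin m → ℝ)
    (hpos : ∀ i, 0 < c i) (hmono : StrictMono c)
    (hint : ∀ i, ∀ k : ℤ, c i ≠ (k : ℝ)) :
    ∃ C : ℝ, 0 < C ∧ ∃ κ : ℝ, 0 < κ ∧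
      ∀ N : ℕ, 1 ≤ N → ∀ l : ℕ, ∀ f : (Fin m → ℤ) → ℂ, lpZ m 2 f ≠ ⊤ →
        (∀ ξ : Fin m → ℝ, (∀ i, |ξ i| ≤ 2 ^ l * (N : ℝ) ^ (-(c i))) →
          HasSum (fun x : Fin m → ℤ =>
            f x * eC (-(∑ i, (x i : ℝ) * ξ i))) 0) →
        lpZ m 2 (Atil m c N f) ≤
          ENNReal.ofReal (C * ((N : ℝ) ^ (-κ) + 2 ^ (-(κ * (l : ℝ))))) *
            lpZ m 2 f := by
  obtain ⟨C, κ, hC, hκ, hmult⟩ := exists_norm_averageMultiplier_le hm hpos hmono.injective hint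
  refine ⟨C, hC, κ, hκ, fun N hN l f _ hvan => ?_⟩
  have hX : 1 ≤ min (N : ℝ) (2 ^ l) := le_min (by exact_mod_cast hN) (one_le_pow₀ one_le_two)
  have hf : Summable f := by
    simpa [eC_zero] using (hvan 0 fun i => by rw [Pi.zero_apply, abs_zero]; positivity).summable
  rw [lpZ_two_eq_eLpNorm hf, lpZ_two_eq_eLpNorm (summable_Atil c N hf)]
  refine eLpNorm_le_mul_eLpNorm_of_ae_le_mul (.of_forall fun t => ?_) 2
  obtain ⟨ξ, hξ, rfl⟩ := exists_abs_le_half_coe_neg_eq t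
  rw [trigSeries_Atil c N hf, norm_mul]
  by_cases hbox : ∀ i, |ξ i| ≤ 2 ^ l * (N : ℝ) ^ (-(c i))
  · have hzero : trigSeries f (fun i => ((-ξ i : ℝ) : UnitAddCircle)) = 0 := by
      simpa only [trigSeries, mFourier_coe_neg] using (hvan ξ hbox).tsum_eq
    rw [hzero, norm_zero, mul_zero, mul_zero]
  · push Not at hbox
    obtain ⟨i, hi⟩ := hbox
    gcongr
    calc ‖averageMultiplier c N ξ‖ ≤ C * min (N : ℝ) (2 ^ l) ^ (-κ) :=
          hmult N _ ξ hX (min_le_left _ _) hξ ⟨i, hi.trans_le' (by gcongr; exact min_le_right _ _)⟩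
      _ ≤ C * ((N : ℝ) ^ (-κ) + 2 ^ (-(κ * l))) := by gcongr; exact min_rpow_neg_le _ _ _ (by simp)

end
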